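/- arXiv:1606.01024 — 2 statements merged into one kernel-verified Lean document; each statement's English description precedes it below -/
import Mathlib

section
/- Let Ω ⊆ ℝ^N be open, 1 ≤ p < ∞, ρ a p-admissible weight, and T the weighted composition C₀-semigroup on L^p_ρ(Ω) given by (T(t)f)(x) = h_t(x) f(φ(t,x)). Then T is stable on L^p_ρ(Ω) if and only if (1) sup_{t≥0} ‖T(t)‖ < ∞, and (2) for every bounded measurable Q ⊆ Ω with finite measure, lim_{t→∞} ∫_Q ρ_{t,p}(x) dx = 0, where ρ_{t,p} = χ_{φ(t,Ω)} |h_t(φ(−t,·))|^p ρ(φ(−t,·)) |det Dφ(−t,·)|. -/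
open MeasureTheory Filter Topology

/-- The cocycle h_t(x) = exp(∫₀^t h(φ(s,x)) ds). -/
noncomputable def cocycle {E : Type*} (h : E → ℝ) (φ : ℝ → E → E) (t : ℝ) (x : E) : ℝ :=
  Real.exp (∫ s in (0:ℝ)..t, h (φ s x))

/-- The function ρ_{t,p} = χ_{φ(t,Ω)} |h_t(φ(−t,·))|^p ρ(φ(−t,·)) |det Dφ(−t,·)|,
where φinv t is the inverse of φ(t,·) on φ(t,Ω). -/
noncomputable def rhotp {N : ℕ} (Ω : Set (EuclideanSpace ℝ (Fin N)))
    (h : EuclideanSpace ℝ (Fin N) → ℝ)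
    (φ φinv : ℝ → EuclideanSpace ℝ (Fin N) → EuclideanSpace ℝ (Fin N))
    (ρ : EuclideanSpace ℝ (Fin N) → ℝ) (p t : ℝ) :
    EuclideanSpace ℝ (Fin N) → ℝ :=
  (φ t '' Ω).indicator fun y =>
    |cocycle h φ t (φinv t y)| ^ p * ρ (φinv t y) * |(fderiv ℝ (φinv t) y).det|

/-!
Write `ν = ρ dμ` on `Ω`. Then `∫ |T(t) f| ^ p dν = ∫ |f| ^ p dm_t`, where `m_t`, the image of
`|h_t| ^ p ν` under `φ t`, has density `ρ_{t,p}` by change of variables, and `t ↦ m_t` is the orbit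
of `ν` under the dual semigroup. Stability says that `∫ g dm_t → 0` for every `ν`-integrable
`g ≥ 0`; a gliding hump then gives `m_t ≤ C ν` with `C` independent of `t`. If `m_s A < ∞` for some
`s`, then `g = |T(s) 1_A| ^ p` is `ν`-integrable and `∫ g dm_t = m_{s+t} A`, so `m_t A → 0`.
Conversely, given `g`, choose `Q` on which `g` is bounded and outside which its `ν`-integral is
small: `m_t Q → 0` controls the integral over `Q`, and `m_t ≤ C ν` the one over the complement.
-/

open Set
open scoped ENNReal NNReal

section DominatedFamilies

variable {α ι : Type*} [MeasurableSpace α] {ν : Measure α} {m : ι → Measure α}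

lemma lintegral_le_mul_of_measure_le_smul {κ : Measure α} {C : ℝ≥0} (hle : κ ≤ C • ν)
    (F : α → ℝ≥0∞) : ∫⁻ x, F x ∂κ ≤ C * ∫⁻ x, F x ∂ν :=
  (lintegral_mono' hle le_rfl).trans_eq (lintegral_smul_measure C F)

-- Gliding hump: if `4 ^ k * ν (A k) < m (i k) (A k)` for all `k`, then the function
-- `∑ k, 2⁻ᵏ (ν (A k))⁻¹ 1_{A k}` is `ν`-integrable, while its integral against `m (i k)` is at
-- least `2 ^ k`.
theorem exists_forall_measure_le_smul_of_iSup_lintegral_ne_top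
    (hm : ∀ g : α → ℝ≥0∞, Measurable g → ∫⁻ x, g x ∂ν ≠ ∞ → ⨆ i, ∫⁻ x, g x ∂m i ≠ ∞) :
    ∃ C : ℝ≥0, ∀ i, m i ≤ C • ν := by
  by_contra! hunbounded
  have hump (k : ℕ) : ∃ i A, MeasurableSet A ∧ 4 ^ k * ν A < m i A := by
    obtain ⟨i, hi⟩ := hunbounded (4 ^ k)
    exact ⟨i, by simpa [Measure.le_iff, ENNReal.smul_def] using hi⟩
  choose i A hA hlt using hump
  set c : ℕ → ℝ≥0∞ := fun k => 2⁻¹ ^ k * (ν (A k))⁻¹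
  have lintegral_sum (κ : Measure α) :
      ∫⁻ x, ∑' k, (A k).indicator (fun _ => c k) x ∂κ = ∑' k, c k * κ (A k) := by
    rw [lintegral_tsum fun k => (measurable_const.indicator (hA k)).aemeasurable]
    exact tsum_congr fun k => lintegral_indicator_const (hA k) _
  have integrable_sum : ∑' k, c k * ν (A k) ≠ ∞ := by
    refine ne_top_of_le_ne_top (b := ∑' k : ℕ, (2⁻¹ : ℝ≥0∞) ^ k) ?_
      (ENNReal.tsum_le_tsum fun k => ?_)
    · simp [ENNReal.tsum_geometric, ENNReal.one_sub_inv_two]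
    · rw [mul_assoc]
      exact mul_le_of_le_one_right' (ENNReal.inv_mul_le_one _)
  have hump_large (k : ℕ) : 2 ^ k ≤ c k * m (i k) (A k) := by
    have hνA : ν (A k) ≠ ∞ := by
      intro h
      simpa [h] using hlt k
    have h4 : 4 ^ k ≤ m (i k) (A k) / ν (A k) :=
      (ENNReal.le_div_iff_mul_le (.inr (pos_of_gt (hlt k)).ne') (.inl hνA)).2 (hlt k).le
    calc (2 : ℝ≥0∞) ^ k = 2⁻¹ ^ k * 4 ^ k := by
          rw [← mul_pow, show (4 : ℝ≥0∞) = 2 * 2 by norm_num, ← mul_assoc,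
            ENNReal.inv_mul_cancel two_ne_zero ENNReal.ofNat_ne_top, one_mul]
      _ ≤ 2⁻¹ ^ k * (m (i k) (A k) / ν (A k)) := by gcongr
      _ = c k * m (i k) (A k) := by rw [div_eq_mul_inv]; ring
  have le_iSup (k : ℕ) :
      2 ^ k ≤ ⨆ j, ∫⁻ x, ∑' k, (A k).indicator (fun _ => c k) x ∂m j :=
    calc (2 : ℝ≥0∞) ^ k ≤ ∑' l, c l * m (i k) (A l) := (hump_large k).trans (ENNReal.le_tsum k)
      _ = ∫⁻ x, ∑' k, (A k).indicator (fun _ => c k) x ∂m (i k) := (lintegral_sum _).symm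
      _ ≤ _ := le_iSup (fun j => ∫⁻ x, ∑' k, (A k).indicator (fun _ => c k) x ∂m j) (i k)
  refine hm _ (.tsum fun k => measurable_const.indicator (hA k)) (by rwa [lintegral_sum]) ?_
  exact top_le_iff.1 (le_of_tendsto' (ENNReal.tendsto_pow_atTop_nhds_top_iff.2 ENNReal.one_lt_two)
    le_iSup)

theorem exists_forall_measure_le_smul_of_tendsto_lintegral {m : ℝ → Measure α}
    (hloc : ∀ T, ∃ C : ℝ≥0, ∀ t ∈ Icc 0 T, m t ≤ C • ν)
    (hlim : ∀ g : α → ℝ≥0∞, Measurable g → ∫⁻ x, g x ∂ν ≠ ∞ →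
      Tendsto (fun t => ∫⁻ x, g x ∂m t) atTop (𝓝 0)) :
    ∃ C : ℝ≥0, ∀ t, 0 ≤ t → m t ≤ C • ν := by
  suffices ∃ C : ℝ≥0, ∀ t : Ici (0 : ℝ), m t ≤ C • ν by simpa using this
  refine exists_forall_measure_le_smul_of_iSup_lintegral_ne_top fun g hg hgν => ?_
  obtain ⟨T, hT⟩ := eventually_atTop.1 ((hlim g hg hgν).eventually_le_const zero_lt_one)
  obtain ⟨C, hC⟩ := hloc T
  refine ne_top_of_le_ne_top (b := 1 + C * ∫⁻ x, g x ∂ν) (by finiteness) (iSup_le fun ⟨t, ht⟩ => ?_)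
  rcases le_total T t with hTt | htT
  · exact (hT t hTt).trans le_self_add
  · refine le_trans ?_ le_add_self
    exact lintegral_le_mul_of_measure_le_smul (hC t ⟨ht, htT⟩) g

theorem tendsto_lintegral_zero_of_measure_le_smul {l : Filter ι} {C : ℝ≥0}
    (hle : ∀ᶠ i in l, m i ≤ C • ν) {F : α → ℝ≥0∞} (hF : ∫⁻ x, F x ∂ν ≠ ∞) {Q : ℕ → Set α}
    (hQ : ∀ n, MeasurableSet (Q n)) (hQmono : Monotone Q) (hQν : ∀ᵐ x ∂ν, ∃ n, x ∈ Q n)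
    (hFQ : ∀ n, ∃ b : ℝ≥0, ∀ x ∈ Q n, F x ≤ b) (hmQ : ∀ n, Tendsto (fun i => m i (Q n)) l (𝓝 0)) :
    Tendsto (fun i => ∫⁻ x, F x ∂m i) l (𝓝 0) := by
  have tail : Tendsto (fun n => C * ∫⁻ x in (Q n)ᶜ, F x ∂ν) atTop (𝓝 0) := by
    have := isFiniteMeasure_withDensity hF
    have hnull : ν.withDensity F (⋂ n, (Q n)ᶜ) = 0 :=
      withDensity_absolutelyContinuous ν F (by
        rw [← compl_iUnion, ← mem_ae_iff]
        filter_upwards [hQν] with x hx using mem_iUnion.2 hx)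
    have hlim := tendsto_measure_iInter_atTop (μ := ν.withDensity F)
      (fun n => (hQ n).compl.nullMeasurableSet) (fun _ _ h => compl_subset_compl.2 (hQmono h))
      ⟨0, measure_ne_top _ _⟩
    rw [hnull] at hlim
    simpa [Function.comp_def, withDensity_apply _ (hQ _).compl] using
      ENNReal.Tendsto.const_mul (a := C) hlim (.inr ENNReal.coe_ne_top)
  have split (n : ℕ) (b : ℝ≥0) (hb : ∀ x ∈ Q n, F x ≤ b) {i : ι} (hi : m i ≤ C • ν) :
      ∫⁻ x, F x ∂m i ≤ b * m i (Q n) + C * ∫⁻ x in (Q n)ᶜ, F x ∂ν := by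
    rw [← lintegral_add_compl F (hQ n), ← setLIntegral_const]
    refine add_le_add (setLIntegral_mono' (hQ n) hb) ?_
    refine lintegral_le_mul_of_measure_le_smul ?_ F
    exact (Measure.restrict_mono subset_rfl hi).trans_eq (Measure.restrict_smul C ν _)
  refine ENNReal.tendsto_nhds_zero.2 fun ε hε => ?_
  have hε2 : 0 < ε / 2 := ENNReal.half_pos hε.ne'
  obtain ⟨n, hn⟩ := (ENNReal.tendsto_nhds_zero.1 tail _ hε2).exists
  obtain ⟨b, hb⟩ := hFQ n
  have core : Tendsto (fun i => b * m i (Q n)) l (𝓝 0) := by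
    simpa using ENNReal.Tendsto.const_mul (a := b) (hmQ n) (.inr ENNReal.coe_ne_top)
  filter_upwards [hle, ENNReal.tendsto_nhds_zero.1 core _ hε2] with i hi hcore
  calc ∫⁻ x, F x ∂m i ≤ ε / 2 + ε / 2 := (split n b hb hi).trans (add_le_add hcore hn)
    _ = ε := ENNReal.add_halves ε

theorem tendsto_lintegral_zero_of_tendsto_measureReal {l : Filter ι} {C : ℝ≥0}
    (hle : ∀ᶠ i in l, m i ≤ C • ν) {F : α → ℝ≥0∞} (hF : Measurable F) (hFν : ∫⁻ x, F x ∂ν ≠ ∞)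
    {S : ℕ → Set α} (hS : ∀ n, MeasurableSet (S n)) (hSmono : Monotone S)
    (hSν : ∀ᵐ x ∂ν, ∃ n, x ∈ S n) (hSfin : ∀ n, ν (S n) ≠ ∞)
    (hmS : ∀ n, Tendsto (fun i => (m i).real (S n)) l (𝓝 0)) :
    Tendsto (fun i => ∫⁻ x, F x ∂m i) l (𝓝 0) := by
  have hmS' (n : ℕ) : Tendsto (fun i => m i (S n)) l (𝓝 0) := by
    rw [← ENNReal.ofReal_zero]
    refine (ENNReal.tendsto_ofReal (hmS n)).congr' ?_
    filter_upwards [hle] with i hi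
    exact ofReal_measureReal (ne_top_of_le_ne_top (ENNReal.mul_ne_top ENNReal.coe_ne_top (hSfin n))
      (hi (S n)))
  refine tendsto_lintegral_zero_of_measure_le_smul hle hFν (Q := fun n => S n ∩ {x | F x ≤ n})
    (fun n => (hS n).inter (measurableSet_le hF measurable_const))
    (fun n k hnk => inter_subset_inter (hSmono hnk) fun x (hx : F x ≤ n) => hx.trans (mod_cast hnk))
    ?_ (fun n => ⟨n, fun x hx => hx.2⟩) fun n => tendsto_of_tendsto_of_tendsto_of_le_of_le
      tendsto_const_nhds (hmS' n) (fun _ => zero_le) fun _ => measure_mono inter_subset_left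
  filter_upwards [hSν, ae_lt_top hF hFν] with x ⟨n, hn⟩ hx
  obtain ⟨k, hk⟩ := ENNReal.exists_nat_gt hx.ne
  exact ⟨max n k, hSmono (le_max_left n k) hn, hk.le.trans (mod_cast le_max_right n k)⟩

lemma exists_measurable_ofReal_abs_rpow_ae_eq {p : ℝ} (hp : 0 < p) {g : α → ℝ≥0∞}
    (hg : Measurable g) (hgν : ∫⁻ x, g x ∂ν ≠ ∞) :
    ∃ f : α → ℝ, Measurable f ∧ (fun x => ENNReal.ofReal (|f x| ^ p)) =ᵐ[ν] g := by
  refine ⟨fun x => (g x).toReal ^ p⁻¹, hg.ennreal_toReal.pow_const _, ?_⟩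
  filter_upwards [ae_lt_top hg hgν] with x hx
  have h0 : 0 ≤ (g x).toReal := ENNReal.toReal_nonneg
  rw [abs_of_nonneg (Real.rpow_nonneg h0 _), Real.rpow_inv_rpow h0 hp.ne',
    ENNReal.ofReal_toReal hx.ne]

theorem tendsto_integral_abs_rpow_iff_tendsto_lintegral {p : ℝ} (hp : 0 < p) {l : Filter ι}
    (hle : ∀ᶠ i in l, ∃ C : ℝ≥0, m i ≤ C • ν) :
    (∀ f : α → ℝ, Measurable f → Integrable (fun x => |f x| ^ p) ν →
        Tendsto (fun i => ∫ x, |f x| ^ p ∂m i) l (𝓝 0)) ↔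
      ∀ g : α → ℝ≥0∞, Measurable g → ∫⁻ x, g x ∂ν ≠ ∞ →
        Tendsto (fun i => ∫⁻ x, g x ∂m i) l (𝓝 0) := by
  have rpow_nonneg {κ : Measure α} (f : α → ℝ) : 0 ≤ᵐ[κ] fun x => |f x| ^ p :=
    .of_forall fun x => by positivity
  constructor
  · intro hreal g hg hgν
    obtain ⟨f, hf, hfg⟩ := exists_measurable_ofReal_abs_rpow_ae_eq hp hg hgν
    have hfν : Integrable (fun x => |f x| ^ p) ν :=
      ⟨(hf.abs.pow_const p).aestronglyMeasurable, (hasFiniteIntegral_iff_ofReal (rpow_nonneg f)).2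
        (by rw [lintegral_congr_ae hfg]; exact hgν.lt_top)⟩
    have hlim := ENNReal.tendsto_ofReal (hreal f hf hfν)
    rw [ENNReal.ofReal_zero] at hlim
    refine hlim.congr' ?_
    filter_upwards [hle] with i ⟨C, hC⟩
    rw [ofReal_integral_eq_lintegral_ofReal
      ((hfν.smul_measure ENNReal.coe_ne_top).mono_measure hC) (rpow_nonneg f)]
    exact lintegral_congr_ae
      ((Measure.absolutelyContinuous_of_le_smul (c := C) hC).ae_eq hfg)
  · intro hlint f hf hfν
    have hlim := hlint _ (hf.abs.pow_const p).ennreal_ofReal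
      ((hasFiniteIntegral_iff_ofReal (rpow_nonneg f)).1 hfν.2).ne
    refine ((ENNReal.tendsto_toReal ENNReal.zero_ne_top).comp hlim).congr fun i => ?_
    exact (integral_eq_lintegral_of_nonneg_ae (rpow_nonneg f)
      (hf.abs.pow_const p).aestronglyMeasurable).symm

end DominatedFamilies

section WeightedMeasure

variable {α : Type*} [MeasurableSpace α]

/-- The measure `ρ dμ` on `Ω`; the weighted space `L^p_ρ(Ω)` is `L^p` of this measure. -/
noncomputable def weightedMeasure (μ : Measure α) (Ω : Set α) (ρ : α → ℝ) : Measure α :=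
  (μ.restrict Ω).withDensity fun x => ENNReal.ofReal (ρ x)

variable {μ : Measure α} {Ω : Set α} {ρ r : α → ℝ}

lemma ae_mem_weightedMeasure (hΩ : MeasurableSet Ω) : ∀ᵐ x ∂weightedMeasure μ Ω ρ, x ∈ Ω :=
  withDensity_absolutelyContinuous _ _ (ae_restrict_mem hΩ)

lemma toReal_ofReal_smul_ae_eq (hΩ : MeasurableSet Ω) (hρ : ∀ x ∈ Ω, 0 ≤ ρ x) (f : α → ℝ) :
    (fun x => (ENNReal.ofReal (ρ x)).toReal • f x) =ᵐ[μ.restrict Ω] fun x => f x * ρ x := by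
  filter_upwards [ae_restrict_mem hΩ] with x hx
  rw [ENNReal.toReal_ofReal (hρ x hx), smul_eq_mul, mul_comm]

lemma integrable_weightedMeasure_iff (hΩ : MeasurableSet Ω) (hρ : ∀ x ∈ Ω, 0 ≤ ρ x)
    (hρm : Measurable ρ) {f : α → ℝ} :
    Integrable f (weightedMeasure μ Ω ρ) ↔ IntegrableOn (fun x => f x * ρ x) Ω μ := by
  rw [weightedMeasure, integrable_withDensity_iff_integrable_smul' hρm.ennreal_ofReal
    (.of_forall fun _ => ENNReal.ofReal_lt_top)]
  exact integrable_congr (toReal_ofReal_smul_ae_eq hΩ hρ f)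

lemma integral_weightedMeasure (hΩ : MeasurableSet Ω) (hρ : ∀ x ∈ Ω, 0 ≤ ρ x)
    (hρm : Measurable ρ) (f : α → ℝ) :
    ∫ x, f x ∂weightedMeasure μ Ω ρ = ∫ x in Ω, f x * ρ x ∂μ := by
  rw [weightedMeasure, integral_withDensity_eq_integral_toReal_smul hρm.ennreal_ofReal
    (.of_forall fun _ => ENNReal.ofReal_lt_top)]
  exact integral_congr_ae (toReal_ofReal_smul_ae_eq hΩ hρ f)

lemma setIntegral_eq_measureReal_weightedMeasure (hr : Measurable r) (hr0 : 0 ≤ r) {A : Set α}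
    (hA : MeasurableSet A) (hAΩ : A ⊆ Ω) :
    ∫ x in A, r x ∂μ = (weightedMeasure μ Ω r).real A := by
  rw [integral_eq_lintegral_of_nonneg_ae (.of_forall hr0) hr.aestronglyMeasurable,
    measureReal_def, weightedMeasure, withDensity_apply _ hA, Measure.restrict_restrict hA,
    inter_eq_left.2 hAΩ]

lemma smul_weightedMeasure (C : ℝ≥0) (ρ : α → ℝ) :
    C • weightedMeasure μ Ω ρ = weightedMeasure μ Ω fun x => C * ρ x := by
  simp_rw [weightedMeasure, ENNReal.ofReal_mul C.coe_nonneg, ENNReal.ofReal_coe_nnreal]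
  exact (withDensity_smul' (C : ℝ≥0∞) _ ENNReal.coe_ne_top).symm

lemma weightedMeasure_le_weightedMeasure_iff [SigmaFinite μ] (hΩ : MeasurableSet Ω)
    (hr : Measurable r) (hρ : ∀ x ∈ Ω, 0 ≤ ρ x) :
    weightedMeasure μ Ω r ≤ weightedMeasure μ Ω ρ ↔ ∀ᵐ x ∂μ.restrict Ω, r x ≤ ρ x := by
  have ofReal_le_iff : (∀ᵐ x ∂μ.restrict Ω, ENNReal.ofReal (r x) ≤ ENNReal.ofReal (ρ x)) ↔
      ∀ᵐ x ∂μ.restrict Ω, r x ≤ ρ x := by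
    refine eventually_congr ?_
    filter_upwards [ae_restrict_mem hΩ] with x hx using ENNReal.ofReal_le_ofReal_iff (hρ x hx)
  rw [← ofReal_le_iff]
  refine ⟨fun hle => ae_le_of_forall_setLIntegral_le_of_sigmaFinite hr.ennreal_ofReal
    fun A hA _ => ?_, withDensity_mono⟩
  simpa only [weightedMeasure, withDensity_apply _ hA] using hle A

lemma exists_forall_weightedMeasure_le_smul_iff [SigmaFinite μ] {ι : Type*} {I : Set ι}
    {r : ι → α → ℝ} (hΩ : MeasurableSet Ω) (hr : ∀ i ∈ I, Measurable (r i))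
    (hρ : ∀ x ∈ Ω, 0 ≤ ρ x) :
    (∃ C : ℝ≥0, ∀ i ∈ I, weightedMeasure μ Ω (r i) ≤ C • weightedMeasure μ Ω ρ) ↔
      ∃ M : ℝ, ∀ i ∈ I, ∀ᵐ x ∂μ.restrict Ω, r i x ≤ M * ρ x := by
  have le_iff (C : ℝ≥0) {i : ι} (hi : i ∈ I) :
      weightedMeasure μ Ω (r i) ≤ C • weightedMeasure μ Ω ρ ↔
        ∀ᵐ x ∂μ.restrict Ω, r i x ≤ C * ρ x := by
    rw [smul_weightedMeasure, weightedMeasure_le_weightedMeasure_iff hΩ (hr i hi)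
      fun x hx => mul_nonneg C.coe_nonneg (hρ x hx)]
  constructor
  · rintro ⟨C, hC⟩
    exact ⟨C, fun i hi => (le_iff C hi).1 (hC i hi)⟩
  · rintro ⟨M, hM⟩
    refine ⟨M.toNNReal, fun i hi => (le_iff _ hi).2 ?_⟩
    filter_upwards [hM i hi, ae_restrict_mem hΩ] with x hle hx
    exact hle.trans (mul_le_mul_of_nonneg_right M.le_coe_toNNReal (hρ x hx))

lemma exists_monotone_isBounded_weightedMeasure_ne_top [PseudoMetricSpace α] [ProperSpace α]
    [OpensMeasurableSpace α] [IsFiniteMeasureOnCompacts μ] (hΩ : MeasurableSet Ω)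
    (hρm : Measurable ρ) :
    ∃ S : ℕ → Set α, Monotone S ∧ (∀ x ∈ Ω, ∃ n, x ∈ S n) ∧ ∀ n, S n ⊆ Ω ∧ MeasurableSet (S n) ∧
      Bornology.IsBounded (S n) ∧ weightedMeasure μ Ω ρ (S n) ≠ ∞ := by
  rcases isEmpty_or_nonempty α with _ | ⟨⟨x₀⟩⟩
  · exact ⟨fun _ => ∅, monotone_const, fun x => isEmptyElim x, fun _ => by simp⟩
  set S : ℕ → Set α := fun n => Ω ∩ (Metric.closedBall x₀ n ∩ {x | ρ x ≤ n})
  have subset_ball (n : ℕ) : S n ⊆ Metric.closedBall x₀ n := fun x hx => hx.2.1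
  have hSm (n : ℕ) : MeasurableSet (S n) :=
    hΩ.inter (measurableSet_closedBall.inter (measurableSet_le hρm measurable_const))
  refine ⟨S, fun n k hnk => ?_, fun x hx => ?_,
    fun n => ⟨inter_subset_left, hSm n, Metric.isBounded_closedBall.subset (subset_ball n), ?_⟩⟩
  · have hnk' : (n : ℝ) ≤ k := mod_cast hnk
    exact inter_subset_inter_right _ (inter_subset_inter (Metric.closedBall_subset_closedBall hnk')
      fun x hx => le_trans hx hnk')
  · obtain ⟨n, hn⟩ := exists_nat_ge (max (dist x x₀) (ρ x))
    exact ⟨n, hx, (le_max_left _ _).trans hn, (le_max_right _ _).trans hn⟩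
  · refine ne_top_of_le_ne_top (b := n * μ (Metric.closedBall x₀ n))
      (ENNReal.mul_ne_top (ENNReal.natCast_ne_top n) measure_closedBall_lt_top.ne) ?_
    calc weightedMeasure μ Ω ρ (S n) = ∫⁻ x in S n, ENNReal.ofReal (ρ x) ∂μ.restrict Ω :=
          withDensity_apply _ (hSm n)
      _ ≤ ∫⁻ _ in S n, n ∂μ.restrict Ω := setLIntegral_mono' (hSm n) fun x hx =>
          ENNReal.ofReal_le_of_le_toReal (by simpa using hx.2.2)
      _ = n * μ.restrict Ω (S n) := setLIntegral_const _ _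
      _ ≤ n * μ (Metric.closedBall x₀ n) := by
          gcongr
          exacts [Measure.restrict_le_self, subset_ball n]

end WeightedMeasure

section ChangeOfVariables

variable {E : Type*} [NormedAddCommGroup E] [NormedSpace ℝ E] {f g : E → E} {Ω : Set E}
  {u v : E → ℝ}

/-- The density of the image under `f` of the measure `u dμ` on `Ω`, where `g` is the inverse of
`f : Ω → f '' Ω`. -/
noncomputable def pushforwardDensity (Ω : Set E) (f g : E → E) (u : E → ℝ) : E → ℝ :=
  (f '' Ω).indicator fun y => u (g y) * |(fderiv ℝ g y).det|

lemma pushforwardDensity_nonneg (hgf : LeftInvOn g f Ω) (hu : ∀ x ∈ Ω, 0 ≤ u x) :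
    0 ≤ pushforwardDensity Ω f g u := by
  refine indicator_nonneg (forall_mem_image.2 fun x hx => ?_)
  rw [hgf hx]
  exact mul_nonneg (hu x hx) (abs_nonneg _)

lemma hasFDerivWithinAt_fderiv_of_contDiffOn (hΩ : IsOpen Ω) (hf : ContDiffOn ℝ 1 f Ω) (x : E)
    (hx : x ∈ Ω) : HasFDerivWithinAt f (fderiv ℝ f x) Ω x :=
  ((hf.contDiffAt (hΩ.mem_nhds hx)).differentiableAt one_ne_zero).hasFDerivAt.hasFDerivWithinAt

variable [FiniteDimensional ℝ E]

lemma abs_det_fderiv_mul_abs_det_fderiv_of_eventually_leftInverse {x : E}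
    (hf : ContDiffAt ℝ 1 f x) (hgf : ∀ᶠ z in 𝓝 x, g (f z) = z) (hdet : (fderiv ℝ f x).det ≠ 0) :
    |(fderiv ℝ f x).det| * |(fderiv ℝ g (f x)).det| = 1 := by
  set e := (fderiv ℝ f x).toContinuousLinearEquivOfDetNeZero hdet
  have he : (e : E →L[ℝ] E) = fderiv ℝ f x :=
    ContinuousLinearMap.coe_toContinuousLinearEquivOfDetNeZero _ hdet
  have hfe : HasStrictFDerivAt f (e : E →L[ℝ] E) x := he ▸ hf.hasStrictFDerivAt one_ne_zero
  rw [(hfe.to_local_left_inverse hgf).hasFDerivAt.fderiv, e.det_coe_symm, he, ← abs_mul,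
    mul_inv_cancel₀ hdet, abs_one]

variable [MeasurableSpace E] [BorelSpace E]

lemma measurable_pushforwardDensity (hΩ : MeasurableSet Ω) (hf : ContinuousOn f Ω)
    (hgf : LeftInvOn g f Ω) (hu : Measurable (Ω.domRestrict u)) :
    Measurable (pushforwardDensity Ω f g u) := by
  have hemb : MeasurableEmbedding (Ω.domRestrict f) := hf.measurableEmbedding hΩ hgf.injOn
  have hext : Function.extend (Ω.domRestrict f) (Ω.domRestrict u) 0 =
      (f '' Ω).indicator fun y => u (g y) := by
    ext y
    by_cases hy : y ∈ f '' Ω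
    · obtain ⟨x, hx, rfl⟩ := hy
      rw [indicator_of_mem (mem_image_of_mem f hx), hgf hx]
      exact hemb.injective.extend_apply _ _ ⟨x, hx⟩
    · rw [indicator_of_notMem hy, Function.extend_apply' _ _ _ (by simpa using hy), Pi.zero_apply]
  have hdet : Measurable fun y => |(fderiv ℝ g y).det| :=
    (ContinuousLinearMap.continuous_det.measurable.comp (measurable_fderiv ℝ g)).abs
  have heq : pushforwardDensity Ω f g u = fun y =>
      Function.extend (Ω.domRestrict f) (Ω.domRestrict u) 0 y * |(fderiv ℝ g y).det| := by
    ext y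
    rw [hext, pushforwardDensity, indicator_mul_left]
  exact heq ▸ (hemb.measurable_extend hu measurable_zero).mul hdet

variable {μ : Measure E} [μ.IsAddHaarMeasure]

lemma map_withDensity_abs_det_fderiv_mul {s : Set E} (hs : MeasurableSet s) {f' : E → E →L[ℝ] E}
    (hf' : ∀ x ∈ s, HasFDerivWithinAt f (f' x) s x) (hinj : InjOn f s) (w : E → ℝ≥0∞) :
    ((μ.restrict s).withDensity fun x => ENNReal.ofReal |(f' x).det| * w (f x)).map f =
      (μ.restrict (f '' s)).withDensity w := by
  classical
  have hfm : AEMeasurable f (μ.restrict s) :=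
    ContinuousOn.aemeasurable (fun x hx => (hf' x hx).continuousWithinAt) hs
  ext A hA
  calc _ = ∫⁻ x in s,
          (f ⁻¹' A).indicator (fun x => ENNReal.ofReal |(f' x).det| * w (f x)) x ∂μ := by
        rw [Measure.map_apply_of_aemeasurable
            (hfm.mono_ac (withDensity_absolutelyContinuous _ _)) hA,
          withDensity_apply₀ _ (hfm.nullMeasurable hA),
          lintegral_indicator₀ (hfm.nullMeasurable hA)]
    _ = ∫⁻ x in s, ENNReal.ofReal |(f' x).det| * A.indicator w (f x) ∂μ := by
        simp only [indicator_apply, mem_preimage, mul_ite, mul_zero]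
    _ = ∫⁻ y in f '' s, A.indicator w y ∂μ :=
        (lintegral_image_eq_lintegral_abs_det_fderiv_mul μ hs hf' hinj _).symm
    _ = _ := by rw [lintegral_indicator hA, withDensity_apply _ hA]

lemma map_weightedMeasure_le (hΩ : IsOpen Ω) (hf : ContDiffOn ℝ 1 f Ω) (hmaps : MapsTo f Ω Ω)
    (hinj : InjOn f Ω) (hle : ∀ᵐ x ∂μ.restrict Ω, u x ≤ |(fderiv ℝ f x).det| * v (f x)) :
    (weightedMeasure μ Ω u).map f ≤ weightedMeasure μ Ω v := by
  set w : E → ℝ≥0∞ := fun y => ENNReal.ofReal (v y)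
  calc _ ≤ ((μ.restrict Ω).withDensity fun x =>
          ENNReal.ofReal |(fderiv ℝ f x).det| * w (f x)).map f := by
        refine Measure.map_mono_of_aemeasurable (withDensity_mono ?_)
          ((hf.continuousOn.aemeasurable hΩ.measurableSet).mono_ac
            (withDensity_absolutelyContinuous _ _))
        filter_upwards [hle] with x hx
        exact (ENNReal.ofReal_le_ofReal hx).trans_eq (ENNReal.ofReal_mul (abs_nonneg _))
    _ = (μ.restrict (f '' Ω)).withDensity w :=
        map_withDensity_abs_det_fderiv_mul hΩ.measurableSet
          (hasFDerivWithinAt_fderiv_of_contDiffOn hΩ hf) hinj w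
    _ ≤ weightedMeasure μ Ω v := by
        rw [weightedMeasure, ← restrict_withDensity hΩ.measurableSet,
          ← restrict_withDensity
            (hΩ.measurableSet.image_of_continuousOn_injOn hf.continuousOn hinj)]
        exact Measure.restrict_mono hmaps.image_subset le_rfl

lemma map_weightedMeasure (hΩ : IsOpen Ω) (hf : ContDiffOn ℝ 1 f Ω)
    (hmaps : MapsTo f Ω Ω) (hgf : LeftInvOn g f Ω)
    (hdet : ∀ᵐ x ∂μ.restrict Ω, (fderiv ℝ f x).det = 0 → u x ≤ 0) :
    (weightedMeasure μ Ω u).map f = weightedMeasure μ Ω (pushforwardDensity Ω f g u) := by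
  set w : E → ℝ≥0∞ := fun y => ENNReal.ofReal (u (g y) * |(fderiv ℝ g y).det|)
  have hfΩ : MeasurableSet (f '' Ω) :=
    hΩ.measurableSet.image_of_continuousOn_injOn hf.continuousOn hgf.injOn
  have density_eq : (fun x => ENNReal.ofReal (u x)) =ᵐ[μ.restrict Ω]
      fun x => ENNReal.ofReal |(fderiv ℝ f x).det| * w (f x) := by
    filter_upwards [hdet, ae_restrict_mem hΩ.measurableSet] with x hdet hx
    rw [← ENNReal.ofReal_mul (abs_nonneg _), hgf hx, mul_left_comm]
    by_cases hx0 : (fderiv ℝ f x).det = 0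
    · simp [hx0, hdet hx0]
    · rw [abs_det_fderiv_mul_abs_det_fderiv_of_eventually_leftInverse
        (hf.contDiffAt (hΩ.mem_nhds hx))
        (eventually_of_mem (hΩ.mem_nhds hx) fun _ hz => hgf hz) hx0, mul_one]
  have density_indicator : (fun y => ENNReal.ofReal (pushforwardDensity Ω f g u y)) =
      (f '' Ω).indicator w :=
    (indicator_comp_of_zero ENNReal.ofReal_zero).symm
  rw [weightedMeasure, withDensity_congr_ae density_eq,
    map_withDensity_abs_det_fderiv_mul hΩ.measurableSet
      (hasFDerivWithinAt_fderiv_of_contDiffOn hΩ hf) hgf.injOn,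
    weightedMeasure, density_indicator, withDensity_indicator hfΩ, Measure.restrict_restrict hfΩ,
    inter_eq_left.2 hmaps.image_subset]

end ChangeOfVariables

section Semiflow

variable {E : Type*} [TopologicalSpace E] {φ : ℝ → E → E} {h : E → ℝ} {Ω : Set E} {s t : ℝ}

/-- `φ` is a continuous semiflow on `Ω`; it is total in time and space, and only its values on
`[0, ∞) × Ω` matter. -/
structure IsSemiflowOn (φ : ℝ → E → E) (Ω : Set E) : Prop where
  map_zero : ∀ x ∈ Ω, φ 0 x = x
  mapsTo : ∀ t, 0 ≤ t → MapsTo (φ t) Ω Ω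
  map_add : ∀ s t, 0 ≤ s → 0 ≤ t → ∀ x ∈ Ω, φ (s + t) x = φ s (φ t x)
  continuousOn : ContinuousOn (fun q : ℝ × E => φ q.1 q.2) (Ici 0 ×ˢ Ω)

namespace IsSemiflowOn

lemma continuousOn_map (hφ : IsSemiflowOn φ Ω) (ht : 0 ≤ t) : ContinuousOn (φ t) Ω :=
  hφ.continuousOn.comp (f := fun x => (t, x)) (by fun_prop) fun _ hx => ⟨ht, hx⟩

lemma continuousOn_comp (hφ : IsSemiflowOn φ Ω) (hh : ContinuousOn h Ω) :
    ContinuousOn (fun q : ℝ × E => h (φ q.1 q.2)) (Ici 0 ×ˢ Ω) :=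
  hh.comp hφ.continuousOn fun q hq => hφ.mapsTo q.1 hq.1 hq.2

lemma continuousOn_cocycle [FirstCountableTopology E] (hφ : IsSemiflowOn φ Ω)
    (hh : ContinuousOn h Ω) (ht : 0 ≤ t) : ContinuousOn (cocycle h φ t) Ω := by
  have joint : Continuous (Function.uncurry fun (x : Ω) (u : ℝ) => h (φ (max u 0) x)) :=
    (hφ.continuousOn_comp hh).comp_continuous
      (f := fun q : Ω × ℝ => (max q.2 0, (q.1 : E))) (by fun_prop)
      fun q => ⟨mem_Ici.2 (le_max_right _ _), q.1.2⟩
  rw [continuousOn_iff_continuous_domRestrict]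
  refine (Real.continuous_exp.comp
    (intervalIntegral.continuous_parametric_intervalIntegral_of_continuous (μ := volume)
      (a₀ := 0) joint (s := fun _ => t) continuous_const)).congr fun x => ?_
  refine congrArg Real.exp (intervalIntegral.integral_congr fun u hu => ?_)
  rw [uIcc_of_le ht] at hu
  simp only [max_eq_left hu.1]

lemma cocycle_add (hφ : IsSemiflowOn φ Ω) (hh : ContinuousOn h Ω) (hs : 0 ≤ s) (ht : 0 ≤ t)
    {x : E} (hx : x ∈ Ω) :
    cocycle h φ (s + t) x = cocycle h φ t x * cocycle h φ s (φ t x) := by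
  have orbit : ContinuousOn (fun u : ℝ => h (φ u x)) (Ici 0) :=
    (hφ.continuousOn_comp hh).comp (f := fun u : ℝ => (u, x)) (by fun_prop) fun _ hu => ⟨hu, hx⟩
  have integrable {a b : ℝ} (ha : 0 ≤ a) (hb : 0 ≤ b) :
      IntervalIntegrable (fun u => h (φ u x)) volume a b :=
    (orbit.mono fun _ hu => (le_min ha hb).trans hu.1).intervalIntegrable
  have shift : ∫ u in t..s + t, h (φ u x) = ∫ u in (0 : ℝ)..s, h (φ u (φ t x)) :=
    calc ∫ u in t..s + t, h (φ u x) = ∫ u in (0 : ℝ)..s, h (φ (u + t) x) := by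
          rw [intervalIntegral.integral_comp_add_right (fun u => h (φ u x)) t, zero_add]
      _ = _ := intervalIntegral.integral_congr fun u hu => by
          rw [uIcc_of_le hs] at hu
          simp only [hφ.map_add u t hu.1 ht x hx]
  rw [cocycle, ← intervalIntegral.integral_add_adjacent_intervals (integrable le_rfl ht)
    (integrable ht (add_nonneg hs ht)), shift, Real.exp_add, cocycle, cocycle]

end IsSemiflowOn

/-- The dual on measures of the semigroup `f ↦ h_t * f ∘ φ t`: if `κ` is concentrated on `Ω`, then
`∫ |f| ^ p d(weightedPushforward h φ p t κ) = ∫ |h_t * f ∘ φ t| ^ p dκ`. -/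
noncomputable def weightedPushforward [MeasurableSpace E] (h : E → ℝ) (φ : ℝ → E → E) (p t : ℝ)
    (κ : Measure E) : Measure E :=
  (κ.withDensity fun x => ENNReal.ofReal (|cocycle h φ t x| ^ p)).map (φ t)

namespace IsSemiflowOn

variable [MeasurableSpace E] [BorelSpace E] {κ : Measure E} {p : ℝ}

lemma aemeasurable_map (hφ : IsSemiflowOn φ Ω) (hΩ : MeasurableSet Ω) (hκ : ∀ᵐ x ∂κ, x ∈ Ω)
    (ht : 0 ≤ t) : AEMeasurable (φ t) κ := by
  rw [← Measure.restrict_eq_self_of_ae_mem hκ]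
  exact (hφ.continuousOn_map ht).aemeasurable hΩ

lemma ae_mem_weightedPushforward (hφ : IsSemiflowOn φ Ω) (hΩ : MeasurableSet Ω)
    (hκ : ∀ᵐ x ∂κ, x ∈ Ω) (ht : 0 ≤ t) : ∀ᵐ x ∂weightedPushforward h φ p t κ, x ∈ Ω := by
  have hac := withDensity_absolutelyContinuous κ fun x => ENNReal.ofReal (|cocycle h φ t x| ^ p)
  refine (ae_map_iff ((hφ.aemeasurable_map hΩ hκ ht).mono_ac hac) hΩ).2 (hac ?_)
  filter_upwards [hκ] with x hx using hφ.mapsTo t ht hx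

variable [FirstCountableTopology E]

lemma aemeasurable_abs_cocycle_rpow (hφ : IsSemiflowOn φ Ω) (hΩ : MeasurableSet Ω)
    (hh : ContinuousOn h Ω) (hκ : ∀ᵐ x ∂κ, x ∈ Ω) (ht : 0 ≤ t) :
    AEMeasurable (fun x => |cocycle h φ t x| ^ p) κ := by
  rw [← Measure.restrict_eq_self_of_ae_mem hκ]
  exact (((hφ.continuousOn_cocycle hh ht).aemeasurable hΩ).abs).pow_const p

lemma lintegral_weightedPushforward (hφ : IsSemiflowOn φ Ω) (hΩ : MeasurableSet Ω)
    (hh : ContinuousOn h Ω) (hκ : ∀ᵐ x ∂κ, x ∈ Ω) (ht : 0 ≤ t) {F : E → ℝ≥0∞}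
    (hF : AEMeasurable F (weightedPushforward h φ p t κ)) :
    ∫⁻ x, F x ∂weightedPushforward h φ p t κ =
      ∫⁻ x, ENNReal.ofReal (|cocycle h φ t x| ^ p) * F (φ t x) ∂κ := by
  have hφt := (hφ.aemeasurable_map hΩ hκ ht).mono_ac (withDensity_absolutelyContinuous κ
    fun x => ENNReal.ofReal (|cocycle h φ t x| ^ p))
  rw [weightedPushforward, lintegral_map' hF hφt]
  exact lintegral_withDensity_eq_lintegral_mul₀'
    (hφ.aemeasurable_abs_cocycle_rpow hΩ hh hκ ht).ennreal_ofReal (hF.comp_aemeasurable hφt)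

lemma integral_abs_rpow_weightedPushforward (hφ : IsSemiflowOn φ Ω) (hΩ : MeasurableSet Ω)
    (hh : ContinuousOn h Ω) (hκ : ∀ᵐ x ∂κ, x ∈ Ω) (ht : 0 ≤ t) {f : E → ℝ} (hf : Measurable f) :
    ∫ x, |f x| ^ p ∂weightedPushforward h φ p t κ =
      ∫ x, |cocycle h φ t x * f (φ t x)| ^ p ∂κ := by
  have hφt := hφ.aemeasurable_map hΩ hκ ht
  rw [weightedPushforward, integral_map (hφt.mono_ac (withDensity_absolutelyContinuous _ _))
      (hf.abs.pow_const p).aestronglyMeasurable,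
    integral_withDensity_eq_integral_toReal_smul₀
      (hφ.aemeasurable_abs_cocycle_rpow hΩ hh hκ ht).ennreal_ofReal
      (.of_forall fun _ => ENNReal.ofReal_lt_top)]
  refine integral_congr_ae (.of_forall fun x => ?_)
  simp only [abs_mul, Real.mul_rpow (abs_nonneg _) (abs_nonneg _), smul_eq_mul,
    ENNReal.toReal_ofReal (Real.rpow_nonneg (abs_nonneg _) _)]

lemma weightedPushforward_apply (hφ : IsSemiflowOn φ Ω) (hΩ : MeasurableSet Ω)
    (hh : ContinuousOn h Ω) (hκ : ∀ᵐ x ∂κ, x ∈ Ω) (ht : 0 ≤ t) {A : Set E} (hA : MeasurableSet A) :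
    weightedPushforward h φ p t κ A =
      ∫⁻ x, ENNReal.ofReal (|cocycle h φ t x| ^ p) * A.indicator 1 (φ t x) ∂κ := by
  rw [← lintegral_indicator_one hA]
  exact hφ.lintegral_weightedPushforward hΩ hh hκ ht (measurable_one.indicator hA).aemeasurable

lemma aemeasurable_abs_cocycle_rpow_mul_indicator (hφ : IsSemiflowOn φ Ω) (hΩ : MeasurableSet Ω)
    (hh : ContinuousOn h Ω) (hκ : ∀ᵐ x ∂κ, x ∈ Ω) (ht : 0 ≤ t) {A : Set E} (hA : MeasurableSet A) :
    AEMeasurable (fun x => ENNReal.ofReal (|cocycle h φ t x| ^ p) *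
      A.indicator (1 : E → ℝ≥0∞) (φ t x)) κ :=
  (hφ.aemeasurable_abs_cocycle_rpow hΩ hh hκ ht).ennreal_ofReal.mul
    ((measurable_one.indicator hA).comp_aemeasurable (hφ.aemeasurable_map hΩ hκ ht))

lemma weightedPushforward_add (hφ : IsSemiflowOn φ Ω) (hΩ : MeasurableSet Ω)
    (hh : ContinuousOn h Ω) (hκ : ∀ᵐ x ∂κ, x ∈ Ω) (hs : 0 ≤ s) (ht : 0 ≤ t) :
    weightedPushforward h φ p (s + t) κ =
      weightedPushforward h φ p s (weightedPushforward h φ p t κ) := by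
  have hκt := hφ.ae_mem_weightedPushforward (h := h) (p := p) hΩ hκ ht
  ext A hA
  rw [hφ.weightedPushforward_apply hΩ hh hκ (add_nonneg hs ht) hA,
    hφ.weightedPushforward_apply hΩ hh hκt hs hA,
    hφ.lintegral_weightedPushforward hΩ hh hκ ht
      (hφ.aemeasurable_abs_cocycle_rpow_mul_indicator hΩ hh hκt hs hA)]
  refine lintegral_congr_ae ?_
  filter_upwards [hκ] with x hx
  rw [hφ.cocycle_add hh hs ht hx, hφ.map_add s t hs ht x hx, abs_mul,
    Real.mul_rpow (abs_nonneg _) (abs_nonneg _), ENNReal.ofReal_mul (by positivity), mul_assoc]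

-- If `weightedPushforward h φ p s κ A` is finite for some `s`, then the function with integral
-- `weightedPushforward h φ p s κ' A` against every `κ'` can be inserted in `hlim`; otherwise
-- `Measure.real` takes its junk value `0` throughout.
lemma tendsto_measureReal_weightedPushforward (hφ : IsSemiflowOn φ Ω) (hΩ : MeasurableSet Ω)
    (hh : ContinuousOn h Ω) (hκ : ∀ᵐ x ∂κ, x ∈ Ω)
    (hac : ∀ t, 0 ≤ t → weightedPushforward h φ p t κ ≪ κ)
    (hlim : ∀ g : E → ℝ≥0∞, Measurable g → ∫⁻ x, g x ∂κ ≠ ∞ →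
      Tendsto (fun t => ∫⁻ x, g x ∂weightedPushforward h φ p t κ) atTop (𝓝 0))
    {A : Set E} (hA : MeasurableSet A) :
    Tendsto (fun t => (weightedPushforward h φ p t κ).real A) atTop (𝓝 0) := by
  by_cases hfin : ∃ s, 0 ≤ s ∧ weightedPushforward h φ p s κ A ≠ ∞
  · obtain ⟨s, hs, hsA⟩ := hfin
    have hF := hφ.aemeasurable_abs_cocycle_rpow_mul_indicator (p := p) hΩ hh hκ hs hA
    rw [hφ.weightedPushforward_apply hΩ hh hκ hs hA, lintegral_congr_ae hF.ae_eq_mk] at hsA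
    have hshift : Tendsto (fun t => weightedPushforward h φ p (s + t) κ A) atTop (𝓝 0) := by
      refine (hlim _ hF.measurable_mk hsA).congr' ?_
      filter_upwards [eventually_ge_atTop 0] with t ht
      rw [← lintegral_congr_ae ((hac t ht).ae_eq hF.ae_eq_mk),
        hφ.weightedPushforward_add hΩ hh hκ hs ht,
        hφ.weightedPushforward_apply hΩ hh (hφ.ae_mem_weightedPushforward hΩ hκ ht) hs hA]
    have := (ENNReal.tendsto_toReal ENNReal.zero_ne_top).comp
      (hshift.comp (tendsto_atTop_add_const_left _ (-s) tendsto_id))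
    simpa [Function.comp_def, measureReal_def] using this
  · push Not at hfin
    refine tendsto_const_nhds.congr' ?_
    filter_upwards [eventually_ge_atTop 0] with t ht
    rw [measureReal_def, hfin t ht, ENNReal.toReal_top]

lemma weightedPushforward_weightedMeasure (hφ : IsSemiflowOn φ Ω) (hΩ : MeasurableSet Ω)
    (hh : ContinuousOn h Ω) {μ : Measure E} {ρ : E → ℝ} (hρ : Measurable ρ) (ht : 0 ≤ t) :
    weightedPushforward h φ p t (weightedMeasure μ Ω ρ) =
      (weightedMeasure μ Ω fun x => |cocycle h φ t x| ^ p * ρ x).map (φ t) := by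
  have hweight := (hφ.aemeasurable_abs_cocycle_rpow (p := p) hΩ hh
    (ae_restrict_mem (μ := μ) hΩ) ht).ennreal_ofReal
  rw [weightedPushforward, weightedMeasure,
    ← withDensity_mul₀ hρ.ennreal_ofReal.aemeasurable hweight, weightedMeasure]
  congr 2 with x
  rw [Pi.mul_apply, mul_comm, ENNReal.ofReal_mul (by positivity)]

theorem tendsto_setIntegral_abs_rpow_iff_tendsto_lintegral (hφ : IsSemiflowOn φ Ω)
    (hΩ : MeasurableSet Ω) (hh : ContinuousOn h Ω) {μ : Measure E} {ρ : E → ℝ}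
    (hρ : ∀ x ∈ Ω, 0 ≤ ρ x) (hρm : Measurable ρ) (hp : 0 < p)
    (hle : ∀ t, 0 ≤ t → ∃ C : ℝ≥0,
      weightedPushforward h φ p t (weightedMeasure μ Ω ρ) ≤ C • weightedMeasure μ Ω ρ) :
    (∀ f : E → ℝ, Measurable f → IntegrableOn (fun x => |f x| ^ p * ρ x) Ω μ →
        Tendsto (fun t => ∫ x in Ω, |cocycle h φ t x * f (φ t x)| ^ p * ρ x ∂μ) atTop (𝓝 0)) ↔
      ∀ g : E → ℝ≥0∞, Measurable g → ∫⁻ x, g x ∂weightedMeasure μ Ω ρ ≠ ∞ →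
        Tendsto (fun t => ∫⁻ x, g x ∂weightedPushforward h φ p t (weightedMeasure μ Ω ρ))
          atTop (𝓝 0) := by
  rw [← tendsto_integral_abs_rpow_iff_tendsto_lintegral hp ((eventually_ge_atTop 0).mono hle)]
  refine forall₂_congr fun f hf =>
    imp_congr (integrable_weightedMeasure_iff hΩ hρ hρm).symm (tendsto_congr' ?_)
  filter_upwards [eventually_ge_atTop 0] with t ht
  rw [hφ.integral_abs_rpow_weightedPushforward hΩ hh (ae_mem_weightedMeasure hΩ) ht hf,
    integral_weightedMeasure hΩ hρ hρm]

theorem tendsto_lintegral_weightedPushforward_iff (hφ : IsSemiflowOn φ Ω) (hΩ : MeasurableSet Ω)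
    (hh : ContinuousOn h Ω) (hκ : ∀ᵐ x ∂κ, x ∈ Ω)
    (hloc : ∀ T, ∃ C : ℝ≥0, ∀ t ∈ Icc 0 T, weightedPushforward h φ p t κ ≤ C • κ)
    {𝒬 : Set (Set E)} (h𝒬 : ∀ Q ∈ 𝒬, MeasurableSet Q) {S : ℕ → Set E} (hS : ∀ n, S n ∈ 𝒬)
    (hSmono : Monotone S) (hSκ : ∀ᵐ x ∂κ, ∃ n, x ∈ S n) (hSfin : ∀ n, κ (S n) ≠ ∞) :
    (∀ g : E → ℝ≥0∞, Measurable g → ∫⁻ x, g x ∂κ ≠ ∞ →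
        Tendsto (fun t => ∫⁻ x, g x ∂weightedPushforward h φ p t κ) atTop (𝓝 0)) ↔
      (∃ C : ℝ≥0, ∀ t, 0 ≤ t → weightedPushforward h φ p t κ ≤ C • κ) ∧
        ∀ Q ∈ 𝒬, Tendsto (fun t => (weightedPushforward h φ p t κ).real Q) atTop (𝓝 0) := by
  constructor
  · intro hlim
    obtain ⟨C, hC⟩ := exists_forall_measure_le_smul_of_tendsto_lintegral hloc hlim
    exact ⟨⟨C, hC⟩, fun Q hQ => hφ.tendsto_measureReal_weightedPushforward hΩ hh hκ
      (fun t ht => Measure.absolutelyContinuous_of_le_smul (c := C) (hC t ht)) hlim (h𝒬 Q hQ)⟩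
  · rintro ⟨⟨C, hC⟩, hlim⟩ g hg hgκ
    exact tendsto_lintegral_zero_of_tendsto_measureReal ((eventually_ge_atTop 0).mono hC) hg hgκ
      (fun n => h𝒬 _ (hS n)) hSmono hSκ hSfin fun n => hlim _ (hS n)

end IsSemiflowOn

end Semiflow

section Stability

variable {E : Type*} [NormedAddCommGroup E] [NormedSpace ℝ E] {Ω : Set E} {φ φinv : ℝ → E → E}
  {h ρ : E → ℝ} {C p t : ℝ}

/-- The density `ρ_{t,p}` of the image of `|h_t| ^ p ρ dμ` under `φ t`; `rhotp` is its instance for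
`E = ℝ^N`. -/
noncomputable def semiflowDensity (Ω : Set E) (h : E → ℝ) (φ φinv : ℝ → E → E) (ρ : E → ℝ)
    (p t : ℝ) : E → ℝ :=
  pushforwardDensity Ω (φ t) (φinv t) fun x => |cocycle h φ t x| ^ p * ρ x

lemma semiflowDensity_nonneg (hinv : LeftInvOn (φinv t) (φ t) Ω) (hρ : ∀ x ∈ Ω, 0 ≤ ρ x) :
    0 ≤ semiflowDensity Ω h φ φinv ρ p t :=
  pushforwardDensity_nonneg hinv fun x hx => mul_nonneg (by positivity) (hρ x hx)

variable [FiniteDimensional ℝ E] [MeasurableSpace E] [BorelSpace E]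

namespace IsSemiflowOn

lemma measurable_semiflowDensity (hφ : IsSemiflowOn φ Ω) (hΩ : MeasurableSet Ω)
    (hh : ContinuousOn h Ω) (hρm : Measurable ρ) (ht : 0 ≤ t)
    (hinv : LeftInvOn (φinv t) (φ t) Ω) : Measurable (semiflowDensity Ω h φ φinv ρ p t) := by
  have hcocycle : Measurable (Ω.domRestrict (cocycle h φ t)) :=
    (hφ.continuousOn_cocycle hh ht).domRestrict.measurable
  exact measurable_pushforwardDensity hΩ (hφ.continuousOn_map ht) hinv
    ((hcocycle.abs.pow_const p).mul (hρm.comp measurable_subtype_coe))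

variable {μ : Measure E} [μ.IsAddHaarMeasure]

lemma weightedPushforward_le_smul (hφ : IsSemiflowOn φ Ω) (hΩ : IsOpen Ω)
    (hh : ContinuousOn h Ω) (hρ : ∀ x ∈ Ω, 0 ≤ ρ x) (hρm : Measurable ρ) (ht : 0 ≤ t)
    (hC1 : ContDiffOn ℝ 1 (φ t) Ω) (hinj : InjOn (φ t) Ω) {B : ℝ≥0} (hCB : C ≤ B)
    (hadm : ∀ᵐ x ∂μ.restrict Ω,
      |cocycle h φ t x| ^ p * ρ x ≤ C * ρ (φ t x) * |(fderiv ℝ (φ t) x).det|) :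
    weightedPushforward h φ p t (weightedMeasure μ Ω ρ) ≤ B • weightedMeasure μ Ω ρ := by
  rw [hφ.weightedPushforward_weightedMeasure hΩ.measurableSet hh hρm ht, smul_weightedMeasure]
  refine map_weightedMeasure_le hΩ hC1 (hφ.mapsTo t ht) hinj ?_
  filter_upwards [hadm, ae_restrict_mem hΩ.measurableSet] with x hadm hx
  have hρφ := hρ _ (hφ.mapsTo t ht hx)
  calc _ ≤ C * ρ (φ t x) * |(fderiv ℝ (φ t) x).det| := hadm
    _ ≤ B * ρ (φ t x) * |(fderiv ℝ (φ t) x).det| := by gcongr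
    _ = _ := mul_comm _ _

lemma weightedPushforward_eq_weightedMeasure (hφ : IsSemiflowOn φ Ω) (hΩ : IsOpen Ω)
    (hh : ContinuousOn h Ω) (hρm : Measurable ρ) (ht : 0 ≤ t)
    (hC1 : ContDiffOn ℝ 1 (φ t) Ω) (hinv : LeftInvOn (φinv t) (φ t) Ω)
    (hadm : ∀ᵐ x ∂μ.restrict Ω,
      |cocycle h φ t x| ^ p * ρ x ≤ C * ρ (φ t x) * |(fderiv ℝ (φ t) x).det|) :
    weightedPushforward h φ p t (weightedMeasure μ Ω ρ) =
      weightedMeasure μ Ω (semiflowDensity Ω h φ φinv ρ p t) := by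
  rw [hφ.weightedPushforward_weightedMeasure hΩ.measurableSet hh hρm ht]
  refine map_weightedMeasure hΩ hC1 (hφ.mapsTo t ht) hinv (hadm.mono fun x hx h0 => ?_)
  simpa only [h0, abs_zero, mul_zero] using hx

end IsSemiflowOn

theorem stmt4_general {μ : Measure E} [μ.IsAddHaarMeasure] (hΩ : IsOpen Ω) (hp : 0 < p)
    (hh : ContinuousOn h Ω) (hρ : ∀ x ∈ Ω, 0 ≤ ρ x) (hρm : Measurable ρ) (hφ : IsSemiflowOn φ Ω)
    (hφC1 : ∀ t, 0 ≤ t → ContDiffOn ℝ 1 (φ t) Ω)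
    (hinv : ∀ t, 0 ≤ t → LeftInvOn (φinv t) (φ t) Ω) {K : ℝ → ℝ}
    (hK : ∀ T, BddAbove (K '' Icc 0 T))
    (hadm : ∀ t, 0 ≤ t → ∀ᵐ x ∂μ.restrict Ω,
      |cocycle h φ t x| ^ p * ρ x ≤ K t * ρ (φ t x) * |(fderiv ℝ (φ t) x).det|) :
    (∀ f : E → ℝ, Measurable f → IntegrableOn (fun x => |f x| ^ p * ρ x) Ω μ →
        Tendsto (fun t => ∫ x in Ω, |cocycle h φ t x * f (φ t x)| ^ p * ρ x ∂μ) atTop (𝓝 0)) ↔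
      (∃ M : ℝ, ∀ t, 0 ≤ t → ∀ᵐ x ∂μ.restrict Ω,
          semiflowDensity Ω h φ φinv ρ p t x ≤ M * ρ x) ∧
        ∀ Q ⊆ Ω, MeasurableSet Q → Bornology.IsBounded Q → μ Q < ⊤ →
          Tendsto (fun t => ∫ x in Q, semiflowDensity Ω h φ φinv ρ p t x ∂μ) atTop (𝓝 0) := by
  have hΩm := hΩ.measurableSet
  have hρt (t : ℝ) (ht : 0 ≤ t) : Measurable (semiflowDensity Ω h φ φinv ρ p t) :=
    hφ.measurable_semiflowDensity hΩm hh hρm ht (hinv t ht)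
  have dual_eq (t : ℝ) (ht : 0 ≤ t) :=
    hφ.weightedPushforward_eq_weightedMeasure hΩ hh hρm ht (hφC1 t ht) (hinv t ht) (hadm t ht)
  have dual_le (T : ℝ) : ∃ B : ℝ≥0, ∀ t ∈ Icc 0 T,
      weightedPushforward h φ p t (weightedMeasure μ Ω ρ) ≤ B • weightedMeasure μ Ω ρ := by
    obtain ⟨B, hB⟩ := hK T
    exact ⟨B.toNNReal, fun t ht => hφ.weightedPushforward_le_smul hΩ hh hρ hρm ht.1
      (hφC1 t ht.1) (hinv t ht.1).injOn ((hB (mem_image_of_mem K ht)).trans B.le_coe_toNNReal)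
      (hadm t ht.1)⟩
  obtain ⟨S, hSmono, hSΩ, hS⟩ :=
    exists_monotone_isBounded_weightedMeasure_ne_top (μ := μ) hΩm hρm
  rw [hφ.tendsto_setIntegral_abs_rpow_iff_tendsto_lintegral hΩm hh hρ hρm hp fun t ht =>
      (dual_le t).imp fun B hB => hB t ⟨ht, le_rfl⟩,
    hφ.tendsto_lintegral_weightedPushforward_iff hΩm hh (ae_mem_weightedMeasure hΩm) dual_le
      (𝒬 := {Q | Q ⊆ Ω ∧ MeasurableSet Q ∧ Bornology.IsBounded Q ∧ μ Q < ⊤}) (fun Q hQ => hQ.2.1)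
      (fun n => ⟨(hS n).1, (hS n).2.1, (hS n).2.2.1, (hS n).2.2.1.measure_lt_top⟩) hSmono
      ((ae_mem_weightedMeasure hΩm).mono hSΩ) fun n => (hS n).2.2.2]
  refine and_congr ((exists_congr fun B => forall₂_congr fun t ht => by rw [dual_eq t ht]).trans
    (exists_forall_weightedMeasure_le_smul_iff (I := Ici 0) hΩm hρt hρ)) ?_
  simp only [mem_ofPred_eq, and_imp]
  refine forall₅_congr fun Q hQΩ hQ _ _ => tendsto_congr' ?_
  filter_upwards [eventually_ge_atTop 0] with t ht
  rw [dual_eq t ht, setIntegral_eq_measureReal_weightedMeasure (hρt t ht)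
    (semiflowDensity_nonneg (hinv t ht) hρ) hQ hQΩ]

end Stability

/-- Theorem 2 (multidimensional case): the weighted composition semigroup
(T(t)f)(x) = h_t(x) f(φ(t,x)) on L^p_ρ(Ω) is stable iff it is bounded and
∫_Q ρ_{t,p} → 0 for every bounded measurable Q ⊆ Ω of finite measure. -/
theorem stmt4 {N : ℕ} (Ω : Set (EuclideanSpace ℝ (Fin N))) (hΩ : IsOpen Ω)
    (p : ℝ) (hp : 1 ≤ p)
    (φ φinv : ℝ → EuclideanSpace ℝ (Fin N) → EuclideanSpace ℝ (Fin N))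
    (h : EuclideanSpace ℝ (Fin N) → ℝ) (hh : ContinuousOn h Ω)
    (ρ : EuclideanSpace ℝ (Fin N) → ℝ) (hρpos : ∀ x ∈ Ω, 0 < ρ x)
    (hρmeas : Measurable ρ)
    (hρloc : ∀ K : Set (EuclideanSpace ℝ (Fin N)), K ⊆ Ω → IsCompact K → IntegrableOn ρ K)
    (hφ0 : ∀ x ∈ Ω, φ 0 x = x)
    (hφmaps : ∀ t : ℝ, 0 ≤ t → ∀ x ∈ Ω, φ t x ∈ Ω)
    (hφsemi : ∀ s t : ℝ, 0 ≤ s → 0 ≤ t → ∀ x ∈ Ω, φ (s + t) x = φ s (φ t x))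
    (hφinj : ∀ t : ℝ, 0 ≤ t → Set.InjOn (φ t) Ω)
    (hφC1 : ∀ t : ℝ, 0 ≤ t → ContDiffOn ℝ 1 (φ t) Ω)
    (hφcont : ContinuousOn (fun q : ℝ × EuclideanSpace ℝ (Fin N) => φ q.1 q.2)
      (Set.Ici 0 ×ˢ Ω))
    (hinv : ∀ t : ℝ, 0 ≤ t → ∀ x ∈ Ω, φinv t (φ t x) = x)
    (hadm : ∃ M ω : ℝ, 1 ≤ M ∧ ∀ t : ℝ, 0 ≤ t →
      ∀ᵐ x ∂(volume.restrict Ω),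
        |cocycle h φ t x| ^ p * ρ x ≤
          M * Real.exp (ω * t) * ρ (φ t x) * |(fderiv ℝ (φ t) x).det|) :
    (∀ f : EuclideanSpace ℝ (Fin N) → ℝ, Measurable f →
        IntegrableOn (fun x => |f x| ^ p * ρ x) Ω →
        Tendsto (fun t => ∫ x in Ω, |cocycle h φ t x * f (φ t x)| ^ p * ρ x)
          atTop (𝓝 0)) ↔
      ((∃ M : ℝ, ∀ t : ℝ, 0 ≤ t →
          ∀ᵐ x ∂(volume.restrict Ω), rhotp Ω h φ φinv ρ p t x ≤ M * ρ x) ∧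
        (∀ Q : Set (EuclideanSpace ℝ (Fin N)), Q ⊆ Ω → MeasurableSet Q →
          Bornology.IsBounded Q → volume Q < ⊤ →
          Tendsto (fun t => ∫ x in Q, rhotp Ω h φ φinv ρ p t x) atTop (𝓝 0))) := by
  obtain ⟨M, ω, -, hadm⟩ := hadm
  exact stmt4_general hΩ (one_pos.trans_le hp) hh (fun x hx => (hρpos x hx).le) hρmeas
    ⟨hφ0, hφmaps, hφsemi, hφcont⟩ hφC1 hinv
    (fun _ => isCompact_Icc.bddAbove_image (by fun_prop)) hadm
end

section
/- Let Ω = (α, β) be a bounded interval, F ∈ C¹([α,β]) decreasing with F(α) = 0 and F(x) < 0 for x ∈ (α, β], with semiflow φ defined for all t ≥ 0, such that every x ∈ (α,β) eventually leaves φ(t̄, Ω) for some t̄ > 0. Let h = −λ F' for some λ ∈ ℝ, and assume ρ = 1 is p-admissible. Then for the semigroup T_{F,h} on L^p(Ω) the following are equivalent: (i) T_{F,h} is stable; (ii) T_{F,h} is not hypercyclic; (iii) λ ≤ −1/p. -/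
open MeasureTheory Filter Topology Set

/-- The weighted composition semigroup applied to f. -/
noncomputable def Tapp (h : ℝ → ℝ) (φ : ℝ → ℝ → ℝ) (t : ℝ) (f : ℝ → ℝ) (x : ℝ) : ℝ :=
  Real.exp (∫ s in (0:ℝ)..t, h (φ s x)) * f (φ t x)

/-- Stability of T_{F,h} on L^p(α,β): all orbits tend to 0 in L^p norm. -/
def StableLp (α β p : ℝ) (h : ℝ → ℝ) (φ : ℝ → ℝ → ℝ) : Prop :=
  ∀ f : ℝ → ℝ, Measurable f → IntegrableOn (fun x => |f x| ^ p) (Ioo α β) →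
    Tendsto (fun t => ∫ x in Ioo α β, |Tapp h φ t f x| ^ p) atTop (𝓝 0)

/-- Hypercyclicity of T_{F,h} on L^p(α,β): some orbit is dense. -/
def HypercyclicLp (α β p : ℝ) (h : ℝ → ℝ) (φ : ℝ → ℝ → ℝ) : Prop :=
  ∃ f : ℝ → ℝ, Measurable f ∧ IntegrableOn (fun x => |f x| ^ p) (Ioo α β) ∧
    ∀ g : ℝ → ℝ, Measurable g → IntegrableOn (fun x => |g x| ^ p) (Ioo α β) →
      ∀ ε : ℝ, 0 < ε → ∃ t : ℝ, 0 ≤ t ∧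
        (∫ x in Ioo α β, |Tapp h φ t f x - g x| ^ p) < ε

/-
In the coordinate `u = travelTime F β x ∈ (0, ∞)` the semiflow is the translation `u ↦ u + t`, and
since `∫₀ᵗ F'(φ(s, x)) ds = log (F(φ(t, x)) / F(x))`, the factor `(-F)^(-λ)` absorbs the potential.
So the semigroup is isometric to left translation on `L^p((0, ∞), V du)` with `V = (-F)^(λp + 1)`
evaluated along the orbit that starts at `β`, where `-F` decreases to `0`.

If `λ ≤ -1/p` then `V` is increasing, the translations are contractions and
`‖T(t) f‖ ≤ ‖f 1_(t, ∞)‖ → 0`, so that every orbit is bounded and tends to `0`.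
If `λ > -1/p` then `V` decreases to `0`: shifting a function far to the right makes it arbitrarily
small, and gluing the shifts of a dense sequence along rapidly growing times gives a dense orbit,
which cannot tend to `0`.
-/

open scoped ENNReal

theorem exists_seq_frequently_eLpNorm_sub_lt {X E : Type*} [MeasurableSpace X] {μ : Measure X}
    [IsSeparable μ] [NormedAddCommGroup E] [SecondCountableTopology E] {p : ℝ≥0∞} (hp : 1 ≤ p)
    (hp_top : p ≠ ∞) :
    ∃ g : ℕ → X → E, (∀ n, StronglyMeasurable (g n) ∧ MemLp (g n) p μ) ∧
      ∀ f, MemLp f p μ → ∀ ε > 0, ∃ᶠ n in atTop, eLpNorm (g n - f) p μ < ε := by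
  have : Fact (1 ≤ p) := ⟨hp⟩
  have : Fact (p ≠ ∞) := ⟨hp_top⟩
  -- Unpairing makes every term of the dense sequence occur infinitely often.
  refine ⟨fun n => TopologicalSpace.denseSeq (Lp E p μ) n.unpair.1,
    fun n => ⟨Lp.stronglyMeasurable _, Lp.memLp _⟩, fun f hf ε hε => frequently_atTop.2 fun N => ?_⟩
  obtain ⟨i, hi⟩ := (TopologicalSpace.denseRange_denseSeq (Lp E p μ)).exists_mem_open
    Metric.isOpen_eball ⟨hf.toLp f, Metric.mem_eball_self hε⟩
  refine ⟨Nat.pair i N, Nat.right_le_pair i N, ?_⟩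
  rw [Metric.mem_eball, Lp.edist_def] at hi
  simp only [Nat.unpair_pair]
  exact (eLpNorm_congr_ae (hf.coeFn_toLp.mono fun x hx => by simp [hx])).trans_lt hi

theorem tendsto_setLIntegral_Ioi_atTop_zero {μ : Measure ℝ} {f : ℝ → ℝ≥0∞}
    (hf : ∫⁻ x, f x ∂μ ≠ ∞) : Tendsto (fun r => ∫⁻ x in Ioi r, f x ∂μ) atTop (𝓝 0) := by
  have : IsFiniteMeasure (μ.withDensity f) := isFiniteMeasure_withDensity hf
  have hempty : (⋂ r : ℝ, Ioi r) = ∅ :=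
    eq_empty_of_forall_notMem fun x hx => lt_irrefl x (mem_iInter.1 hx x)
  have h := tendsto_measure_iInter_atTop (μ := μ.withDensity f) (s := Ioi)
    (fun r => measurableSet_Ioi.nullMeasurableSet) (fun r s hrs => Ioi_subset_Ioi hrs)
    ⟨0, measure_ne_top _ _⟩
  simpa only [hempty, measure_empty, Function.comp_def, withDensity_apply f measurableSet_Ioi]
    using h

theorem tendsto_eLpNorm_restrict_Ioi_atTop_zero {E : Type*} [NormedAddCommGroup E] {μ : Measure ℝ}
    {f : ℝ → E} {p : ℝ≥0∞} (hp0 : p ≠ 0) (hp_top : p ≠ ∞) (hf : eLpNorm f p μ < ∞) :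
    Tendsto (fun r => eLpNorm f p (μ.restrict (Ioi r))) atTop (𝓝 0) := by
  have hq : 0 < p.toReal := ENNReal.toReal_pos hp0 hp_top
  have htail := tendsto_setLIntegral_Ioi_atTop_zero
    (lintegral_rpow_enorm_lt_top_of_eLpNorm_lt_top hp0 hp_top hf).ne
  have hroot := (ENNReal.continuous_rpow_const (y := 1 / p.toReal)).tendsto 0
  rw [ENNReal.zero_rpow_of_pos (one_div_pos.2 hq)] at hroot
  simpa only [eLpNorm_eq_lintegral_rpow_enorm_toReal hp0 hp_top, Function.comp_def] using
    hroot.comp htail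

theorem eLpNorm_le_rpow_of_lintegral_le {X E : Type*} [MeasurableSpace X] {μ : Measure X}
    [NormedAddCommGroup E] {f : X → E} {p C : ℝ≥0∞} (hp0 : p ≠ 0) (hp_top : p ≠ ∞)
    (h : ∫⁻ x, ‖f x‖ₑ ^ p.toReal ∂μ ≤ C) : eLpNorm f p μ ≤ C ^ (1 / p.toReal) := by
  rw [eLpNorm_eq_lintegral_rpow_enorm_toReal hp0 hp_top]
  gcongr

theorem exists_measurable_concat {E : Type*} [MeasurableSpace E] {t : ℕ → ℝ} (ht : Monotone t)
    {g : ℕ → ℝ → E} (hg : ∀ n, Measurable (g n)) :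
    ∃ k : ℝ → E, Measurable k ∧ ∀ n, ∀ u ∈ Ioc 0 (t (n + 1) - t n), k (u + t n) = g n u := by
  obtain ⟨k, hk_meas, hk⟩ := exists_measurable_piecewise (fun n => Ioc (t n) (t (n + 1)))
    (fun n => measurableSet_Ioc) (fun n u => g n (u - t n))
    (fun n => (hg n).comp (measurable_sub_const _))
    (fun i j hij u hu => (disjoint_left.1 (ht.pairwise_disjoint_on_Ioc_succ hij) hu.1 hu.2).elim)
  refine ⟨k, hk_meas, fun n u hu => ?_⟩
  simpa using hk n (x := u + t n) ⟨by linarith [hu.1], by linarith [hu.2]⟩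

theorem tendsto_two_mul_geometric_rpow {r : ℝ} (hr : 0 < r) :
    Tendsto (fun n : ℕ => 2 * ((2⁻¹ : ℝ≥0∞) ^ n * 2) ^ r) atTop (𝓝 0) := by
  have hcont : Continuous fun x : ℝ≥0∞ => 2 * (x * 2) ^ r :=
    (ENNReal.continuous_const_mul ENNReal.ofNat_ne_top).comp
      (ENNReal.continuous_rpow_const.comp (ENNReal.continuous_mul_const ENNReal.ofNat_ne_top))
  have hpow : Tendsto (fun n => (2⁻¹ : ℝ≥0∞) ^ n) atTop (𝓝 0) :=
    ENNReal.tendsto_pow_atTop_nhds_zero_of_lt_one (by simp)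
  simpa [ENNReal.zero_rpow_of_pos hr, Function.comp_def] using (hcont.tendsto 0).comp hpow

/-- The measure `V(u) du` on `(0, ∞)`: `L^p` of this measure is the weighted space on which the
semigroup acts by left translations. -/
noncomputable def weightedHalfLine (V : ℝ → ℝ≥0∞) : Measure ℝ :=
  (volume.restrict (Ioi 0)).withDensity V

namespace weightedHalfLine

instance (V : ℝ → ℝ≥0∞) : SFinite (weightedHalfLine V) :=
  inferInstanceAs (SFinite ((volume.restrict (Ioi 0)).withDensity V))

theorem ae_pos (V : ℝ → ℝ≥0∞) : ∀ᵐ u ∂weightedHalfLine V, 0 < u :=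
  (withDensity_absolutelyContinuous _ _).ae_le (ae_restrict_mem measurableSet_Ioi)

theorem mono {V W : ℝ → ℝ≥0∞} (h : ∀ u, 0 < u → V u ≤ W u) :
    weightedHalfLine V ≤ weightedHalfLine W :=
  withDensity_mono ((ae_restrict_iff' measurableSet_Ioi).2 (Eventually.of_forall h))

theorem map_add_right (V : ℝ → ℝ≥0∞) {a : ℝ} (ha : 0 ≤ a) :
    (weightedHalfLine fun u => V (u + a)).map (· + a) = (weightedHalfLine V).restrict (Ioi a) := by
  ext s hs
  have hpre : (· + a) ⁻¹' (s ∩ Ioi a) = (· + a) ⁻¹' s ∩ Ioi 0 := by ext; simp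
  rw [Measure.map_apply (measurable_add_const a) hs, weightedHalfLine, weightedHalfLine,
    withDensity_apply _ (measurable_add_const a hs), Measure.restrict_apply hs,
    withDensity_apply _ (hs.inter measurableSet_Ioi),
    Measure.restrict_restrict (measurable_add_const a hs),
    Measure.restrict_restrict (hs.inter measurableSet_Ioi), inter_assoc,
    inter_eq_left.2 (Ioi_subset_Ioi ha), ← hpre]
  exact (measurePreserving_add_right volume a).setLIntegral_comp_preimage_emb
    (measurableEmbedding_addRight a) V (s ∩ Ioi a)

theorem eLpNorm_comp_add_right {E : Type*} [NormedAddCommGroup E] (V : ℝ → ℝ≥0∞) {a : ℝ}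
    (ha : 0 ≤ a) (f : ℝ → E) (p : ℝ≥0∞) :
    eLpNorm (fun u => f (u + a)) p (weightedHalfLine fun u => V (u + a)) =
      eLpNorm f p ((weightedHalfLine V).restrict (Ioi a)) := by
  rw [← map_add_right V ha]
  exact ((measurableEmbedding_addRight a).eLpNorm_map_measure).symm

theorem eLpNorm_comp_add_right_le {E : Type*} [NormedAddCommGroup E]
    {V : ℝ → ℝ≥0∞} (hV : MonotoneOn V (Ioi 0)) {a : ℝ} (ha : 0 ≤ a) (f : ℝ → E) (p : ℝ≥0∞) :
    eLpNorm (fun u => f (u + a)) p (weightedHalfLine V) ≤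
      eLpNorm f p ((weightedHalfLine V).restrict (Ioi a)) := by
  rw [← eLpNorm_comp_add_right V ha]
  exact eLpNorm_mono_measure _ (mono fun u hu =>
    hV hu (add_pos_of_pos_of_nonneg hu ha) (le_add_of_nonneg_right ha))

theorem eLpNorm_le_eLpNorm_restrict_Ioi {E : Type*} [NormedAddCommGroup E] (V : ℝ → ℝ≥0∞)
    (p : ℝ≥0∞) {f : ℝ → E} {δ : ℝ} (hf : ∀ u ∈ Ioc 0 δ, f u = 0) :
    eLpNorm f p (weightedHalfLine V) ≤ eLpNorm f p ((weightedHalfLine V).restrict (Ioi δ)) := by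
  rw [← eLpNorm_indicator_eq_eLpNorm_restrict measurableSet_Ioi]
  refine eLpNorm_mono_enorm_ae ?_
  filter_upwards [ae_pos V] with u hu
  by_cases huδ : u ∈ Ioi δ
  · rw [indicator_of_mem huδ]
  · simp [hf u ⟨hu, not_lt.1 huδ⟩]

theorem setLIntegral_Ioc (V : ℝ → ℝ≥0∞) {a : ℝ} (ha : 0 ≤ a) (b : ℝ) (f : ℝ → ℝ≥0∞) :
    ∫⁻ u in Ioc a b, f u ∂weightedHalfLine V =
      ∫⁻ u in Ioc 0 (b - a), f (u + a) ∂weightedHalfLine fun u => V (u + a) := by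
  have hpre : (· + a) ⁻¹' Ioc a b = Ioc 0 (b - a) := by ext; simp
  rw [← inter_eq_left.2 (Ioc_subset_Ioi_self : Ioc a b ⊆ Ioi a),
    ← Measure.restrict_restrict measurableSet_Ioc, ← map_add_right V ha,
    (measurableEmbedding_addRight a).restrict_map, (measurableEmbedding_addRight a).lintegral_map,
    hpre]

theorem tendsto_lintegral_add {V : ℝ → ℝ≥0∞} (hV : AntitoneOn V (Ioi 0))
    (hV0 : Tendsto V atTop (𝓝 0)) {m : ℝ → ℝ≥0∞} (hm : Measurable m) (hm_top : ∀ u, m u ≠ ∞)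
    (hint : ∫⁻ u, m u ∂weightedHalfLine V ≠ ∞) :
    Tendsto (fun a => ∫⁻ u, m u ∂weightedHalfLine fun u => V (u + a)) atTop (𝓝 0) := by
  have hV_meas : ∀ {a : ℝ}, 0 ≤ a → AEMeasurable (fun u => V (u + a)) (volume.restrict (Ioi 0)) :=
    fun {a} ha => aemeasurable_restrict_of_antitoneOn measurableSet_Ioi fun x hx y hy hxy =>
      hV (add_pos_of_pos_of_nonneg hx ha) (add_pos_of_pos_of_nonneg hy ha) (by gcongr)
  have hrw : ∀ {a : ℝ}, 0 ≤ a → ∫⁻ u, m u ∂weightedHalfLine (fun u => V (u + a)) =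
      ∫⁻ u in Ioi 0, V (u + a) * m u := fun ha =>
    lintegral_withDensity_eq_lintegral_mul₀ (hV_meas ha) hm.aemeasurable
  have hlim : Tendsto (fun a => ∫⁻ u in Ioi 0, V (u + a) * m u) atTop
      (𝓝 (∫⁻ _ in Ioi (0 : ℝ), 0)) := by
    refine tendsto_lintegral_filter_of_dominated_convergence' (fun u => V u * m u) ?_ ?_ ?_ ?_
    · filter_upwards [eventually_ge_atTop 0] with a ha using (hV_meas ha).mul hm.aemeasurable
    · filter_upwards [eventually_ge_atTop 0] with a ha
      filter_upwards [ae_restrict_mem measurableSet_Ioi] with u hu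
      gcongr
      exact hV hu (add_pos_of_pos_of_nonneg hu ha) (by linarith)
    · have hrw0 := hrw le_rfl
      simp only [add_zero] at hrw0
      rwa [← hrw0]
    · refine Eventually.of_forall fun u => ?_
      simpa using ENNReal.Tendsto.mul_const
        (hV0.comp (tendsto_atTop_add_const_left atTop u tendsto_id)) (Or.inr (hm_top u))
  rw [lintegral_zero] at hlim
  exact hlim.congr' ((eventually_ge_atTop 0).mono fun a ha => (hrw ha).symm)

theorem setLIntegral_Ioi_le_tsum (V : ℝ → ℝ≥0∞) {t : ℕ → ℝ} (ht : Monotone t)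
    (ht_top : Tendsto t atTop atTop) {k : ℝ → ℝ≥0∞} {m : ℕ → ℝ → ℝ≥0∞}
    (hk : ∀ j, ∀ u ∈ Ioc 0 (t (j + 1) - t j), k (u + t j) = m j u) (n : ℕ) :
    ∫⁻ u in Ioi (t (n + 1) - t n), k (u + t n) ∂weightedHalfLine V ≤
      ∑' j, ∫⁻ u, m (n + 1 + j) u ∂weightedHalfLine fun u => V (u + (t (n + 1 + j) - t n)) := by
  set τ : ℕ → ℝ := fun j => t (n + 1 + j) - t n
  have hτ_nonneg : ∀ j, 0 ≤ τ j := fun j => sub_nonneg.2 (ht (by lia))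
  have hτ_top : Tendsto τ atTop atTop := tendsto_atTop_add_const_right _ _
    (ht_top.comp (tendsto_atTop_mono (Nat.le_add_left · (n + 1)) tendsto_id))
  have hcover : ⋃ j, Ioc (τ j) (τ (j + 1)) = Ioi (t (n + 1) - t n) :=
    iUnion_Ioc_map_succ_eq_Ioi (f := τ) (fun j => sub_le_sub_right (ht (by simp)) _)
      (not_bddAbove_of_tendsto_atTop hτ_top)
  rw [← hcover]
  refine (lintegral_iUnion_le _ _).trans (ENNReal.tsum_le_tsum fun j => ?_)
  rw [setLIntegral_Ioc V (hτ_nonneg j)]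
  refine (setLIntegral_congr_fun measurableSet_Ioc fun u hu => ?_).trans_le
    (setLIntegral_le_lintegral _ _)
  have hu' : u ∈ Ioc 0 (t (n + 1 + j + 1) - t (n + 1 + j)) := by
    simpa only [τ, ← add_assoc, sub_sub_sub_cancel_right] using hu
  rw [← hk _ u hu']
  congr 1
  simp only [τ]
  ring

theorem setLIntegral_Ioi_le_mul_two (V : ℝ → ℝ≥0∞) {t : ℕ → ℝ} (ht : Monotone t)
    (ht_top : Tendsto t atTop atTop) {k : ℝ → ℝ≥0∞} {m : ℕ → ℝ → ℝ≥0∞}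
    (hk : ∀ j, ∀ u ∈ Ioc 0 (t (j + 1) - t j), k (u + t j) = m j u) (n : ℕ) {C : ℝ≥0∞}
    (hm : ∀ j, ∫⁻ u, m (n + 1 + j) u ∂weightedHalfLine (fun u => V (u + (t (n + 1 + j) - t n))) ≤
      C * 2⁻¹ ^ j) :
    ∫⁻ u in Ioi (t (n + 1) - t n), k (u + t n) ∂weightedHalfLine V ≤ C * 2 := by
  rw [← ENNReal.tsum_geometric_two, ← ENNReal.tsum_mul_left]
  exact (setLIntegral_Ioi_le_tsum V ht ht_top hk n).trans (ENNReal.tsum_le_tsum hm)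

theorem exists_times_lintegral_le {V : ℝ → ℝ≥0∞} (hV : AntitoneOn V (Ioi 0))
    (hV0 : Tendsto V atTop (𝓝 0)) {m : ℕ → ℝ → ℝ≥0∞} (hm : ∀ n, Measurable (m n))
    (hm_top : ∀ n u, m n u ≠ ∞)
    (hint : ∀ n, ∫⁻ u, m n u ∂weightedHalfLine V ≠ ∞) :
    ∃ t : ℕ → ℝ, t 0 = 0 ∧ Monotone t ∧ Tendsto t atTop atTop ∧
      (∀ n, ∫⁻ u in Ioi (t (n + 1) - t n), m n u ∂weightedHalfLine V ≤ 2⁻¹ ^ n) ∧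
      ∀ i n, i ≤ n → ∫⁻ u, m (n + 1) u ∂weightedHalfLine (fun u => V (u + (t (n + 1) - t i))) ≤
        2⁻¹ ^ n := by
  have hgap : ∀ n, ∃ δ, 1 ≤ δ ∧ ∫⁻ u in Ioi δ, m n u ∂weightedHalfLine V ≤ 2⁻¹ ^ n ∧
      ∀ a ≥ δ, ∫⁻ u, m (n + 1) u ∂weightedHalfLine (fun u => V (u + a)) ≤ 2⁻¹ ^ n := by
    intro n
    have hpos : (0 : ℝ≥0∞) < 2⁻¹ ^ n := ENNReal.pow_pos (by simp) n
    have htail := (tendsto_setLIntegral_Ioi_atTop_zero (hint n)).eventually_le_const hpos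
    have hshift := (tendsto_lintegral_add hV hV0 (hm (n + 1)) (hm_top (n + 1))
      (hint (n + 1))).eventually_le_const hpos
    exact ((eventually_ge_atTop 1).and (htail.and (eventually_forall_ge_atTop.2 hshift))).exists
  choose δ hδ_one hδ_tail hδ_shift using hgap
  set t : ℕ → ℝ := fun n => ∑ i ∈ Finset.range n, δ i
  have ht_succ : ∀ n, t (n + 1) - t n = δ n := fun n => by simp [t, Finset.sum_range_succ]
  have ht : Monotone t := monotone_nat_of_le_succ fun n => by linarith [ht_succ n, hδ_one n]
  refine ⟨t, Finset.sum_range_zero δ, ht, tendsto_atTop_mono (fun n => ?_)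
    (tendsto_natCast_atTop_atTop (R := ℝ)), fun n => ?_, fun i n hin => hδ_shift n _ ?_⟩
  · simpa using Finset.card_nsmul_le_sum (Finset.range n) δ 1 fun i _ => hδ_one i
  · rw [ht_succ]
    exact hδ_tail n
  · rw [← ht_succ]
    exact sub_le_sub_left (ht hin) _

variable {E : Type*} [NormedAddCommGroup E] [SecondCountableTopology E] [MeasurableSpace E]
  [BorelSpace E] {V : ℝ → ℝ≥0∞} {p : ℝ≥0∞}

theorem exists_eLpNorm_comp_add_sub_le (hV : AntitoneOn V (Ioi 0))
    (hV0 : Tendsto V atTop (𝓝 0)) (hp : 1 ≤ p) (hp_top : p ≠ ∞) {g : ℕ → ℝ → E}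
    (hg : ∀ n, Measurable (g n)) (hg_mem : ∀ n, MemLp (g n) p (weightedHalfLine V)) :
    ∃ (k : ℝ → E) (t : ℕ → ℝ), Measurable k ∧ t 0 = 0 ∧ Tendsto t atTop atTop ∧
      ∀ n, eLpNorm (fun u => k (u + t n) - g n u) p (weightedHalfLine V) ≤
        2 * (2⁻¹ ^ n * 2) ^ (1 / p.toReal) := by
  have hp0 : p ≠ 0 := (zero_lt_one.trans_le hp).ne'
  have hq : 0 < p.toReal := ENNReal.toReal_pos hp0 hp_top
  obtain ⟨t, ht0, ht, ht_top, ht_tail, ht_shift⟩ := exists_times_lintegral_le hV hV0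
    (m := fun n u => ‖g n u‖ₑ ^ p.toReal) (fun n => (hg n).enorm.pow_const _)
    (fun n u => ENNReal.rpow_ne_top_of_nonneg hq.le enorm_ne_top)
    fun n => (lintegral_rpow_enorm_lt_top_of_eLpNorm_lt_top hp0 hp_top (hg_mem n).2).ne
  obtain ⟨k, hk_meas, hk⟩ := exists_measurable_concat ht hg
  have hk_tail : ∀ n, ∫⁻ u in Ioi (t (n + 1) - t n), ‖k (u + t n)‖ₑ ^ p.toReal
      ∂weightedHalfLine V ≤ 2⁻¹ ^ n * 2 := fun n =>
    setLIntegral_Ioi_le_mul_two V ht ht_top (k := fun u => ‖k u‖ₑ ^ p.toReal)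
      (m := fun n u => ‖g n u‖ₑ ^ p.toReal) (fun j u hu => by simp only [hk j u hu]) n
      fun j => by
        rw [← pow_add, add_right_comm]
        exact ht_shift n (n + j) (Nat.le_add_right n j)
  have hg_tail : ∀ n, ∫⁻ u in Ioi (t (n + 1) - t n), ‖g n u‖ₑ ^ p.toReal
      ∂weightedHalfLine V ≤ 2⁻¹ ^ n * 2 := fun n =>
    (ht_tail n).trans (le_mul_of_one_le_right' one_le_two)
  refine ⟨k, t, hk_meas, ht0, ht_top, fun n => ?_⟩
  calc eLpNorm (fun u => k (u + t n) - g n u) p (weightedHalfLine V)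
      ≤ eLpNorm (fun u => k (u + t n) - g n u) p
          ((weightedHalfLine V).restrict (Ioi (t (n + 1) - t n))) :=
        eLpNorm_le_eLpNorm_restrict_Ioi V p fun u hu => sub_eq_zero.2 (hk n u hu)
    _ ≤ eLpNorm (fun u => k (u + t n)) p _ + eLpNorm (g n) p _ :=
      eLpNorm_sub_le (hk_meas.comp (measurable_add_const _)).aestronglyMeasurable
        (hg n).aestronglyMeasurable hp
    _ ≤ _ := add_le_add (eLpNorm_le_rpow_of_lintegral_le hp0 hp_top (hk_tail n))
        (eLpNorm_le_rpow_of_lintegral_le hp0 hp_top (hg_tail n))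
    _ = 2 * (2⁻¹ ^ n * 2) ^ (1 / p.toReal) := (two_mul _).symm

theorem exists_frequently_eLpNorm_comp_add_sub_lt (hV : AntitoneOn V (Ioi 0))
    (hV0 : Tendsto V atTop (𝓝 0)) (hp : 1 ≤ p) (hp_top : p ≠ ∞) :
    ∃ k : ℝ → E, Measurable k ∧ MemLp k p (weightedHalfLine V) ∧
      ∀ g, MemLp g p (weightedHalfLine V) → ∀ ε > 0,
        ∃ᶠ t in atTop, eLpNorm (fun u => k (u + t) - g u) p (weightedHalfLine V) < ε := by
  obtain ⟨d, hd, hd_dense⟩ := exists_seq_frequently_eLpNorm_sub_lt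
    (μ := weightedHalfLine V) (E := E) hp hp_top
  obtain ⟨k, t, hk, ht0, ht_top, hbound⟩ := exists_eLpNorm_comp_add_sub_le hV hV0 hp hp_top
    (fun n => (hd n).1.measurable) fun n => (hd n).2
  have hr : 0 < 1 / p.toReal :=
    one_div_pos.2 (ENNReal.toReal_pos (zero_lt_one.trans_le hp).ne' hp_top)
  have hk_meas : ∀ s, AEStronglyMeasurable (fun u => k (u + s)) (weightedHalfLine V) := fun s =>
    (hk.comp (measurable_add_const s)).aestronglyMeasurable
  have hk_mem : MemLp k p (weightedHalfLine V) := by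
    have hsub : MemLp (fun u => k (u + t 0) - d 0 u) p (weightedHalfLine V) :=
      ⟨(hk_meas _).sub (hd 0).2.1, (hbound 0).trans_lt (by finiteness)⟩
    simpa [ht0, Pi.add_def] using hsub.add (hd 0).2
  refine ⟨k, hk, hk_mem, fun g hg ε hε => ht_top.frequently ?_⟩
  have hε2 : 0 < ε / 2 := ENNReal.half_pos hε.ne'
  have hlim := (tendsto_two_mul_geometric_rpow hr).eventually_lt_const hε2
  refine ((hd_dense g hg _ hε2).and_eventually hlim).mono fun n ⟨hdn, hsmall⟩ => ?_
  calc eLpNorm (fun u => k (u + t n) - g u) p (weightedHalfLine V)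
      = eLpNorm ((fun u => k (u + t n) - d n u) + (d n - g)) p (weightedHalfLine V) := by
        congr 1
        ext u
        simp
    _ ≤ _ := eLpNorm_add_le ((hk_meas _).sub (hd n).2.1) ((hd n).2.1.sub hg.1) hp
    _ < ε / 2 + ε / 2 := ENNReal.add_lt_add ((hbound n).trans_lt hsmall) hdn
    _ = ε := ENNReal.add_halves ε

end weightedHalfLine

/-- A decreasing negative vector field on `(α, β)` whose only equilibrium is the left endpoint.
The paper's condition `F α = 0` is encoded as a limit at `α`. -/
structure IsDecayingField (F : ℝ → ℝ) (α β : ℝ) : Prop where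
  lt : α < β
  differentiableOn : DifferentiableOn ℝ F (Ioo α β)
  antitoneOn : AntitoneOn F (Ioo α β)
  neg : ∀ x ∈ Ioo α β, F x < 0
  tendsto : Tendsto F (𝓝[>] α) (𝓝 0)

/-- `φ` is the semiflow on `(α, β)` of the differential equation `x' = F x`. -/
structure IsSemiflow (F : ℝ → ℝ) (α β : ℝ) (φ : ℝ → ℝ → ℝ) : Prop where
  zero : ∀ x ∈ Ioo α β, φ 0 x = x
  mem : ∀ t, 0 ≤ t → ∀ x ∈ Ioo α β, φ t x ∈ Ioo α β
  hasDerivWithinAt : ∀ x ∈ Ioo α β, ∀ t, 0 ≤ t →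
    HasDerivWithinAt (fun s => φ s x) (F (φ t x)) (Ici 0) t

/-- The time it takes the field `F` to move a particle from `β` down to `x`: the coordinate in
which the flow of `F` is the translation. -/
noncomputable def travelTime (F : ℝ → ℝ) (β x : ℝ) : ℝ := ∫ s in x..β, (-F s)⁻¹

/-- The inverse of `travelTime`: the point of `(α, β)` reached from `β` at time `u > 0`. -/
noncomputable def position (F : ℝ → ℝ) (α β : ℝ) : ℝ → ℝ :=
  Function.invFunOn (travelTime F β) (Ioo α β)

/-- The speed at time `u > 0` of the particle that starts from `β`. -/
noncomputable def speed (F : ℝ → ℝ) (α β u : ℝ) : ℝ := -F (position F α β u)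

namespace IsDecayingField

variable {F : ℝ → ℝ} {α β x : ℝ}

theorem neg_pos (hF : IsDecayingField F α β) (hx : x ∈ Ioo α β) : 0 < -F x :=
  Left.neg_pos_iff.2 (hF.neg x hx)

theorem deriv_nonpos (hF : IsDecayingField F α β) (hx : x ∈ Ioo α β) : deriv F x ≤ 0 := by
  rw [← derivWithin_of_isOpen isOpen_Ioo hx]
  exact hF.antitoneOn.derivWithin_nonpos

theorem continuousOn_inv_neg (hF : IsDecayingField F α β) :
    ContinuousOn (fun x => (-F x)⁻¹) (Ioo α β) :=
  hF.differentiableOn.continuousOn.neg.inv₀ fun _ hx => (hF.neg_pos hx).ne'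

theorem integrableOn_inv_neg (hF : IsDecayingField F α β) (hx : x ∈ Ioo α β) :
    IntegrableOn (fun s => (-F s)⁻¹) (Icc x β) := by
  rw [integrableOn_Icc_iff_integrableOn_Ico]
  have hsub : Ico x β ⊆ Ioo α β := fun s hs => ⟨hx.1.trans_le hs.1, hs.2⟩
  refine IntegrableOn.of_bound measure_Ico_lt_top
    ((hF.continuousOn_inv_neg.mono hsub).aestronglyMeasurable measurableSet_Ico) (-F x)⁻¹ ?_
  filter_upwards [ae_restrict_mem measurableSet_Ico] with s hs
  rw [Real.norm_of_nonneg (inv_nonneg.2 (hF.neg_pos (hsub hs)).le)]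
  exact inv_anti₀ (hF.neg_pos hx) (neg_le_neg (hF.antitoneOn hx (hsub hs) hs.1))

theorem intervalIntegrable_inv_neg (hF : IsDecayingField F α β) (hx : x ∈ Ioo α β) :
    IntervalIntegrable (fun s => (-F s)⁻¹) volume x β :=
  (intervalIntegrable_iff_integrableOn_Icc_of_le hx.2.le).2 (hF.integrableOn_inv_neg hx)

theorem hasDerivAt_travelTime (hF : IsDecayingField F α β) (hx : x ∈ Ioo α β) :
    HasDerivAt (travelTime F β) (-(-F x)⁻¹) x :=
  intervalIntegral.integral_hasDerivAt_left (hF.intervalIntegrable_inv_neg hx)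
    (hF.continuousOn_inv_neg.stronglyMeasurableAtFilter isOpen_Ioo x hx)
    (hF.continuousOn_inv_neg.continuousAt (isOpen_Ioo.mem_nhds hx))

theorem strictAntiOn_travelTime (hF : IsDecayingField F α β) :
    StrictAntiOn (travelTime F β) (Ioo α β) := by
  refine strictAntiOn_of_deriv_neg (convex_Ioo α β)
    (fun x hx => (hF.hasDerivAt_travelTime hx).continuousAt.continuousWithinAt) fun x hx => ?_
  rw [interior_Ioo] at hx
  rw [(hF.hasDerivAt_travelTime hx).deriv]
  exact neg_neg_of_pos (inv_pos.2 (hF.neg_pos hx))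

theorem travelTime_pos (hF : IsDecayingField F α β) (hx : x ∈ Ioo α β) : 0 < travelTime F β x :=
  intervalIntegral.intervalIntegral_pos_of_pos_on (hF.intervalIntegrable_inv_neg hx)
    (fun _ hs => inv_pos.2 (hF.neg_pos ⟨hx.1.trans hs.1, hs.2⟩)) hx.2

end IsDecayingField

namespace IsSemiflow

variable {F : ℝ → ℝ} {α β x t : ℝ} {φ : ℝ → ℝ → ℝ}

theorem travelTime_flow (hφ : IsSemiflow F α β φ) (hF : IsDecayingField F α β) (ht : 0 ≤ t)
    (hx : x ∈ Ioo α β) : travelTime F β (φ t x) = travelTime F β x + t := by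
  have hderiv : ∀ s, 0 ≤ s →
      HasDerivWithinAt (fun s => travelTime F β (φ s x) - s) 0 (Ici 0) s := by
    intro s hs
    have hne : -F (φ s x) ≠ 0 := (hF.neg_pos (hφ.mem s hs x hx)).ne'
    have hsub := ((hF.hasDerivAt_travelTime (hφ.mem s hs x hx)).comp_hasDerivWithinAt s
      (hφ.hasDerivWithinAt x hx s hs)).sub (hasDerivWithinAt_id s (Ici 0))
    rw [neg_mul_comm, inv_mul_cancel₀ hne, sub_self] at hsub
    exact hsub
  have hconst := constant_of_has_deriv_right_zero
    (fun s hs => (hderiv s hs.1).continuousWithinAt.mono Icc_subset_Ici_self)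
    (fun s hs => (hderiv s hs.1).mono (Ici_subset_Ici.2 hs.1)) t ⟨ht, le_rfl⟩
  rw [hφ.zero x hx, sub_zero] at hconst
  linarith

theorem bijOn_travelTime (hφ : IsSemiflow F α β φ) (hF : IsDecayingField F α β) :
    BijOn (travelTime F β) (Ioo α β) (Ioi 0) := by
  refine ⟨fun x => hF.travelTime_pos, hF.strictAntiOn_travelTime.injOn, fun u hu => ?_⟩
  obtain ⟨x, hx⟩ := nonempty_Ioo.2 hF.lt
  have hy : φ u x ∈ Ioo α β := hφ.mem u (le_of_lt hu) x hx
  have hcont : ContinuousOn (travelTime F β) (Icc (φ u x) β) := by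
    rw [← uIcc_of_le hy.2.le]
    refine intervalIntegral.continuousOn_primitive_interval_left ?_
    rw [uIcc_of_le hy.2.le]
    exact hF.integrableOn_inv_neg hy
  have hβ : travelTime F β β = 0 := intervalIntegral.integral_same
  have hu_lt : u < travelTime F β (φ u x) := by
    rw [hφ.travelTime_flow hF (le_of_lt hu) hx]
    exact lt_add_of_pos_left u (hF.travelTime_pos hx)
  have hu_mem : u ∈ Ioo (travelTime F β β) (travelTime F β (φ u x)) := ⟨hβ.trans_lt hu, hu_lt⟩
  exact image_mono (Ioo_subset_Ioo_left hy.1.le) (intermediate_value_Ioo' hy.2.le hcont hu_mem)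

theorem hasDerivAt_log_neg_flow (hφ : IsSemiflow F α β φ) (hF : IsDecayingField F α β) (ht : 0 < t)
    (hx : x ∈ Ioo α β) : HasDerivAt (fun s => Real.log (-F (φ s x))) (deriv F (φ t x)) t := by
  have hmem := hφ.mem t ht.le x hx
  have hflow := (hφ.hasDerivWithinAt x hx t ht.le).hasDerivAt (Ici_mem_nhds ht)
  have hfield := (hF.differentiableOn.differentiableAt (isOpen_Ioo.mem_nhds hmem)).hasDerivAt
  have hlog := ((hfield.comp t hflow).fun_neg.log (hF.neg_pos hmem).ne')
  simp only [Function.comp_def] at hlog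
  rwa [← mul_neg, mul_div_cancel_right₀ _ (hF.neg_pos hmem).ne'] at hlog

theorem integral_deriv_flow (hφ : IsSemiflow F α β φ) (hF : IsDecayingField F α β) (ht : 0 ≤ t)
    (hx : x ∈ Ioo α β) :
    ∫ s in 0..t, deriv F (φ s x) = Real.log (-F (φ t x)) - Real.log (-F x) := by
  have hφ_cont : ContinuousOn (fun s => φ s x) (Icc 0 t) := fun s hs =>
    (hφ.hasDerivWithinAt x hx s hs.1).continuousWithinAt.mono Icc_subset_Ici_self
  have hcont : ContinuousOn (fun s => Real.log (-F (φ s x))) (Icc 0 t) :=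
    (hF.differentiableOn.continuousOn.fun_neg.comp hφ_cont fun s hs => hφ.mem s hs.1 x hx).log
      fun s hs => (hF.neg_pos (hφ.mem s hs.1 x hx)).ne'
  have hint : IntervalIntegrable (fun s => -deriv F (φ s x)) volume 0 t := by
    refine intervalIntegral.intervalIntegrable_deriv_of_nonneg
      (g := fun s => -Real.log (-F (φ s x))) ?_ ?_ ?_
    · simpa only [uIcc_of_le ht] using hcont.fun_neg
    · rw [min_eq_left ht, max_eq_right ht]
      exact fun s hs => (hφ.hasDerivAt_log_neg_flow hF hs.1 hx).fun_neg
    · rw [min_eq_left ht, max_eq_right ht]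
      exact fun s hs => neg_nonneg.2 (hF.deriv_nonpos (hφ.mem s hs.1.le x hx))
  rw [intervalIntegral.integral_eq_sub_of_hasDerivAt_of_le ht hcont
    (fun s hs => hφ.hasDerivAt_log_neg_flow hF hs.1 hx)
    (by simpa only [Pi.neg_def, neg_neg] using hint.neg), hφ.zero x hx]

theorem exp_integral_flow {h : ℝ → ℝ} {lam : ℝ} (hφ : IsSemiflow F α β φ)
    (hF : IsDecayingField F α β) (hh : ∀ x ∈ Ioo α β, h x = -lam * deriv F x) (ht : 0 ≤ t)
    (hx : x ∈ Ioo α β) :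
    Real.exp (∫ s in 0..t, h (φ s x)) = (-F (φ t x)) ^ (-lam) * (-F x) ^ lam := by
  have hcongr : ∫ s in 0..t, h (φ s x) = ∫ s in 0..t, -lam * deriv F (φ s x) :=
    intervalIntegral.integral_congr fun s hs => hh _ (hφ.mem s (by simp_all) x hx)
  rw [hcongr, intervalIntegral.integral_const_mul, hφ.integral_deriv_flow hF ht hx,
    Real.rpow_def_of_pos (hF.neg_pos (hφ.mem t ht x hx)), Real.rpow_def_of_pos (hF.neg_pos hx),
    ← Real.exp_add]
  ring_nf

end IsSemiflow

section Straightening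

variable {F : ℝ → ℝ} {α β u : ℝ}

theorem position_mem_Ioo (hT : BijOn (travelTime F β) (Ioo α β) (Ioi 0)) (hu : 0 < u) :
    position F α β u ∈ Ioo α β :=
  hT.surjOn.mapsTo_invFunOn hu

theorem travelTime_position (hT : BijOn (travelTime F β) (Ioo α β) (Ioi 0)) (hu : 0 < u) :
    travelTime F β (position F α β u) = u :=
  hT.surjOn.rightInvOn_invFunOn hu

theorem position_travelTime (hT : BijOn (travelTime F β) (Ioo α β) (Ioi 0)) {x : ℝ}
    (hx : x ∈ Ioo α β) : position F α β (travelTime F β x) = x :=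
  hT.injOn.leftInvOn_invFunOn hx

namespace IsDecayingField

theorem speed_pos (hF : IsDecayingField F α β) (hT : BijOn (travelTime F β) (Ioo α β) (Ioi 0))
    (hu : 0 < u) : 0 < speed F α β u :=
  hF.neg_pos (position_mem_Ioo hT hu)

theorem strictAntiOn_position (hF : IsDecayingField F α β)
    (hT : BijOn (travelTime F β) (Ioo α β) (Ioi 0)) :
    StrictAntiOn (position F α β) (Ioi 0) := by
  intro u hu v hv huv
  rw [← hF.strictAntiOn_travelTime.lt_iff_gt (position_mem_Ioo hT hu) (position_mem_Ioo hT hv),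
    travelTime_position hT hu, travelTime_position hT hv]
  exact huv

theorem antitoneOn_speed (hF : IsDecayingField F α β)
    (hT : BijOn (travelTime F β) (Ioo α β) (Ioi 0)) : AntitoneOn (speed F α β) (Ioi 0) :=
  fun _ hu _ hv huv => neg_le_neg (hF.antitoneOn (position_mem_Ioo hT hv) (position_mem_Ioo hT hu)
    ((hF.strictAntiOn_position hT).antitoneOn hu hv huv))

theorem tendsto_position (hF : IsDecayingField F α β)
    (hT : BijOn (travelTime F β) (Ioo α β) (Ioi 0)) :
    Tendsto (position F α β) atTop (𝓝[>] α) := by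
  refine (nhdsGT_basis α).tendsto_right_iff.2 fun b hb => ?_
  obtain ⟨x, hαx, hxb⟩ := exists_between (lt_min hb hF.lt)
  have hx : x ∈ Ioo α β := ⟨hαx, hxb.trans_le (min_le_right _ _)⟩
  filter_upwards [eventually_gt_atTop (travelTime F β x)] with u hu
  have hu0 : 0 < u := (hF.travelTime_pos hx).trans hu
  have hlt := hF.strictAntiOn_position hT (hF.travelTime_pos hx) hu0 hu
  rw [position_travelTime hT hx] at hlt
  exact ⟨(position_mem_Ioo hT hu0).1, hlt.trans (hxb.trans_le (min_le_left _ _))⟩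

theorem tendsto_speed (hF : IsDecayingField F α β)
    (hT : BijOn (travelTime F β) (Ioo α β) (Ioi 0)) :
    Tendsto (speed F α β) atTop (𝓝 0) := by
  have hneg := (hF.tendsto.comp (hF.tendsto_position hT)).neg
  rwa [neg_zero] at hneg

end IsDecayingField

/-- The density, in the coordinate `u = travelTime F β x`, of the norm that the isometry
`straighten F α β lam` carries over from `L^p(α, β)`. -/
noncomputable def weight (F : ℝ → ℝ) (α β lam p u : ℝ) : ℝ≥0∞ :=
  ENNReal.ofReal (speed F α β u ^ (lam * p + 1))

/-- The function `f` in the coordinate `u = travelTime F β x`, multiplied by the factor that absorbs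
the potential `-lam * F'`: it turns the weighted composition semigroup into translations. -/
noncomputable def straighten (F : ℝ → ℝ) (α β lam : ℝ) (f : ℝ → ℝ) (u : ℝ) : ℝ :=
  speed F α β u ^ (-lam) * f (position F α β u)

namespace IsDecayingField

variable {lam p : ℝ}

theorem antitoneOn_weight (hF : IsDecayingField F α β)
    (hT : BijOn (travelTime F β) (Ioo α β) (Ioi 0)) (h : 0 ≤ lam * p + 1) :
    AntitoneOn (weight F α β lam p) (Ioi 0) := fun _ hu _ hv huv =>
  ENNReal.ofReal_le_ofReal
    (Real.rpow_le_rpow (hF.speed_pos hT hv).le (hF.antitoneOn_speed hT hu hv huv) h)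

theorem monotoneOn_weight (hF : IsDecayingField F α β)
    (hT : BijOn (travelTime F β) (Ioo α β) (Ioi 0)) (h : lam * p + 1 ≤ 0) :
    MonotoneOn (weight F α β lam p) (Ioi 0) := fun _ hu _ hv huv =>
  ENNReal.ofReal_le_ofReal
    (Real.rpow_le_rpow_of_nonpos (hF.speed_pos hT hv) (hF.antitoneOn_speed hT hu hv huv) h)

theorem tendsto_weight (hF : IsDecayingField F α β)
    (hT : BijOn (travelTime F β) (Ioo α β) (Ioi 0)) (h : 0 < lam * p + 1) :
    Tendsto (weight F α β lam p) atTop (𝓝 0) := by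
  have hrpow := (hF.tendsto_speed hT).rpow_const (p := lam * p + 1) (Or.inr h.le)
  have hofReal := ENNReal.tendsto_ofReal hrpow
  rwa [Real.zero_rpow h.ne', ENNReal.ofReal_zero] at hofReal

theorem aemeasurable_speed (hF : IsDecayingField F α β)
    (hT : BijOn (travelTime F β) (Ioo α β) (Ioi 0)) :
    AEMeasurable (speed F α β) (volume.restrict (Ioi 0)) :=
  aemeasurable_restrict_of_antitoneOn measurableSet_Ioi (hF.antitoneOn_speed hT)

theorem lintegral_weightedHalfLine_weight (hF : IsDecayingField F α β)
    (hT : BijOn (travelTime F β) (Ioo α β) (Ioi 0)) (g : ℝ → ℝ≥0∞) :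
    ∫⁻ u, g u ∂weightedHalfLine (weight F α β lam p) =
      ∫⁻ x in Ioo α β, ENNReal.ofReal ((-F x) ^ (lam * p)) * g (travelTime F β x) := by
  have hweight : AEMeasurable (weight F α β lam p) (volume.restrict (Ioi 0)) :=
    ((hF.aemeasurable_speed hT).pow_const _).ennreal_ofReal
  rw [weightedHalfLine, lintegral_withDensity_eq_lintegral_mul_non_measurable₀ _ hweight
      (Eventually.of_forall fun _ => ENNReal.ofReal_lt_top),
    ← hT.image_eq, lintegral_image_eq_lintegral_abs_deriv_mul measurableSet_Ioo
      (fun x hx => (hF.hasDerivAt_travelTime hx).hasDerivWithinAt) hT.injOn]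
  refine setLIntegral_congr_fun measurableSet_Ioo fun x hx => ?_
  have hpos := hF.neg_pos hx
  have hdensity : |-(-F x)⁻¹| * (-F x) ^ (lam * p + 1) = (-F x) ^ (lam * p) := by
    rw [abs_neg, abs_of_pos (inv_pos.2 hpos), Real.rpow_add_one hpos.ne', mul_comm,
      mul_inv_cancel_right₀ hpos.ne']
  simp only [Pi.mul_apply, weight, speed, position_travelTime hT hx]
  rw [← mul_assoc, ← ENNReal.ofReal_mul (abs_nonneg _), hdensity]

theorem eLpNorm_straighten (hF : IsDecayingField F α β)
    (hT : BijOn (travelTime F β) (Ioo α β) (Ioi 0)) (hp : 0 < p) (f : ℝ → ℝ) :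
    eLpNorm (straighten F α β lam f) (ENNReal.ofReal p) (weightedHalfLine (weight F α β lam p)) =
      eLpNorm f (ENNReal.ofReal p) (volume.restrict (Ioo α β)) := by
  have hp0 : ENNReal.ofReal p ≠ 0 := (ENNReal.ofReal_pos.2 hp).ne'
  rw [eLpNorm_eq_lintegral_rpow_enorm_toReal hp0 ENNReal.ofReal_ne_top,
    eLpNorm_eq_lintegral_rpow_enorm_toReal hp0 ENNReal.ofReal_ne_top,
    ENNReal.toReal_ofReal hp.le, hF.lintegral_weightedHalfLine_weight hT]
  congr 1
  refine setLIntegral_congr_fun measurableSet_Ioo fun x hx => ?_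
  have hpos := hF.neg_pos hx
  simp only [straighten, speed, position_travelTime hT hx]
  rw [enorm_mul, ENNReal.mul_rpow_of_nonneg _ _ hp.le, Real.enorm_of_nonneg (by positivity),
    ENNReal.ofReal_rpow_of_pos (by positivity), ← Real.rpow_mul hpos.le, ← mul_assoc,
    ← ENNReal.ofReal_mul (by positivity), ← Real.rpow_add hpos, ← add_mul, add_neg_cancel, zero_mul,
    Real.rpow_zero, ENNReal.ofReal_one, one_mul]

theorem memLp_straighten (hF : IsDecayingField F α β)
    (hT : BijOn (travelTime F β) (Ioo α β) (Ioi 0)) (hp : 0 < p) {f : ℝ → ℝ} (hf : Measurable f)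
    (hf_mem : MemLp f (ENNReal.ofReal p) (volume.restrict (Ioo α β))) :
    MemLp (straighten F α β lam f) (ENNReal.ofReal p)
      (weightedHalfLine (weight F α β lam p)) := by
  have hposition : AEMeasurable (position F α β) (volume.restrict (Ioi 0)) :=
    aemeasurable_restrict_of_antitoneOn measurableSet_Ioi (hF.strictAntiOn_position hT).antitoneOn
  refine ⟨AEStronglyMeasurable.mono_ac (withDensity_absolutelyContinuous _ _)
    (((hF.aemeasurable_speed hT).pow_const _).mul
      (hf.comp_aemeasurable hposition)).aestronglyMeasurable, ?_⟩
  rw [hF.eLpNorm_straighten hT hp]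
  exact hf_mem.2

theorem exists_straighten_eqOn (hF : IsDecayingField F α β)
    (hT : BijOn (travelTime F β) (Ioo α β) (Ioi 0)) (lam : ℝ) {k : ℝ → ℝ} (hk : Measurable k) :
    ∃ f, Measurable f ∧ EqOn (straighten F α β lam f) k (Ioi 0) := by
  classical
  have hmeas : ∀ {g : ℝ → ℝ}, ContinuousOn g (Ioo α β) → Measurable ((Ioo α β).piecewise g 0) :=
    fun hg => hg.measurable_piecewise continuousOn_const measurableSet_Ioo
  have hF_cont := hF.differentiableOn.continuousOn
  have hT_cont : ContinuousOn (travelTime F β) (Ioo α β) := fun x hx =>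
    (hF.hasDerivAt_travelTime hx).continuousAt.continuousWithinAt
  refine ⟨fun x => (Ioo α β).piecewise (-F) 0 x ^ lam *
      k ((Ioo α β).piecewise (travelTime F β) 0 x),
    ((hmeas hF_cont.neg).pow_const _).mul (hk.comp (hmeas hT_cont)), fun u hu => ?_⟩
  have hmem := position_mem_Ioo hT hu
  simp only [straighten, piecewise_eq_of_mem _ _ _ hmem, travelTime_position hT hu, Pi.neg_apply,
    ← mul_assoc]
  rw [speed, ← Real.rpow_add (hF.neg_pos hmem), neg_add_cancel, Real.rpow_zero, one_mul]

end IsDecayingField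

end Straightening

namespace IsSemiflow

variable {F h : ℝ → ℝ} {α β lam p t : ℝ} {φ : ℝ → ℝ → ℝ}

theorem position_add (hφ : IsSemiflow F α β φ) (hF : IsDecayingField F α β) (ht : 0 ≤ t) {u : ℝ}
    (hu : 0 < u) : position F α β (u + t) = φ t (position F α β u) := by
  have hT := hφ.bijOn_travelTime hF
  have hmem := position_mem_Ioo hT hu
  rw [← position_travelTime hT (hφ.mem t ht _ hmem), hφ.travelTime_flow hF ht hmem,
    travelTime_position hT hu]

theorem straighten_Tapp (hφ : IsSemiflow F α β φ) (hF : IsDecayingField F α β)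
    (hh : ∀ x ∈ Ioo α β, h x = -lam * deriv F x) (ht : 0 ≤ t) {u : ℝ} (hu : 0 < u) (f : ℝ → ℝ) :
    straighten F α β lam (Tapp h φ t f) u = straighten F α β lam f (u + t) := by
  have hmem := position_mem_Ioo (hφ.bijOn_travelTime hF) hu
  have hcancel : (-F (position F α β u)) ^ (-lam) * (-F (position F α β u)) ^ lam = 1 := by
    rw [← Real.rpow_add (hF.neg_pos hmem), neg_add_cancel, Real.rpow_zero]
  rw [straighten, straighten, Tapp, hφ.exp_integral_flow hF hh ht hmem, speed, speed,
    hφ.position_add hF ht hu]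
  linear_combination (-F (φ t (position F α β u))) ^ (-lam) * f (φ t (position F α β u)) * hcancel

theorem eLpNorm_Tapp_sub (hφ : IsSemiflow F α β φ) (hF : IsDecayingField F α β) (hp : 0 < p)
    (hh : ∀ x ∈ Ioo α β, h x = -lam * deriv F x) (ht : 0 ≤ t) (f g : ℝ → ℝ) :
    eLpNorm (fun x => Tapp h φ t f x - g x) (ENNReal.ofReal p) (volume.restrict (Ioo α β)) =
      eLpNorm (fun u => straighten F α β lam f (u + t) - straighten F α β lam g u)
        (ENNReal.ofReal p) (weightedHalfLine (weight F α β lam p)) := by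
  rw [← hF.eLpNorm_straighten (lam := lam) (hφ.bijOn_travelTime hF) hp]
  refine eLpNorm_congr_ae ?_
  filter_upwards [weightedHalfLine.ae_pos (weight F α β lam p)] with u hu
  rw [← hφ.straighten_Tapp hF hh ht hu, straighten, straighten, straighten, mul_sub]

theorem monotoneOn_flow (hφ : IsSemiflow F α β φ) (hF : IsDecayingField F α β) (ht : 0 ≤ t) :
    MonotoneOn (φ t) (Ioo α β) := by
  intro x hx y hy hxy
  rw [← hF.strictAntiOn_travelTime.le_iff_ge (hφ.mem t ht y hy) (hφ.mem t ht x hx),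
    hφ.travelTime_flow hF ht hx, hφ.travelTime_flow hF ht hy]
  gcongr
  exact hF.strictAntiOn_travelTime.antitoneOn hx hy hxy

theorem aestronglyMeasurable_Tapp (hφ : IsSemiflow F α β φ) (hF : IsDecayingField F α β)
    (hh : ∀ x ∈ Ioo α β, h x = -lam * deriv F x) (ht : 0 ≤ t) {f : ℝ → ℝ} (hf : Measurable f) :
    AEStronglyMeasurable (Tapp h φ t f) (volume.restrict (Ioo α β)) := by
  have hflow := hφ.monotoneOn_flow hF ht
  have hF_meas : AEMeasurable F (volume.restrict (Ioo α β)) :=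
    aemeasurable_restrict_of_antitoneOn measurableSet_Ioo hF.antitoneOn
  have hFflow_meas : AEMeasurable (fun x => F (φ t x)) (volume.restrict (Ioo α β)) :=
    aemeasurable_restrict_of_antitoneOn measurableSet_Ioo
      (hF.antitoneOn.comp_MonotoneOn hflow (hφ.mem t ht))
  have hmeas := ((hFflow_meas.neg.pow_const (-lam)).mul (hF_meas.neg.pow_const lam)).mul
    (hf.comp_aemeasurable (aemeasurable_restrict_of_monotoneOn measurableSet_Ioo hflow))
  refine hmeas.aestronglyMeasurable.congr ?_
  filter_upwards [ae_restrict_mem measurableSet_Ioo] with x hx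
  simp only [Pi.mul_apply, Pi.neg_apply, Function.comp_apply, Tapp,
    hφ.exp_integral_flow hF hh ht hx]

end IsSemiflow

section RealIntegral

variable {X : Type*} [MeasurableSpace X] {μ : Measure X} {p : ℝ} {f : X → ℝ}

theorem integrable_abs_rpow_iff (hp : 0 < p) (hf : AEStronglyMeasurable f μ) :
    Integrable (fun x => |f x| ^ p) μ ↔ MemLp f (ENNReal.ofReal p) μ := by
  simpa only [Real.norm_eq_abs, ENNReal.toReal_ofReal hp.le] using
    integrable_norm_rpow_iff hf (ENNReal.ofReal_pos.2 hp).ne' ENNReal.ofReal_ne_top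

theorem integral_abs_rpow_lt_iff (hp : 0 < p) (hf : MemLp f (ENNReal.ofReal p) μ) {ε : ℝ}
    (hε : 0 < ε) :
    ∫ x, |f x| ^ p ∂μ < ε ↔ eLpNorm f (ENNReal.ofReal p) μ < ENNReal.ofReal (ε ^ p⁻¹) := by
  have hnorm := lpNorm_eq_integral_norm_rpow_toReal (ENNReal.ofReal_pos.2 hp).ne'
    ENNReal.ofReal_ne_top hf.1
  rw [ENNReal.toReal_ofReal hp.le, ← toReal_eLpNorm hf.1] at hnorm
  simp only [Real.norm_eq_abs] at hnorm
  rw [ENNReal.lt_ofReal_iff_toReal_lt hf.2.ne, hnorm,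
    Real.rpow_lt_rpow_iff (integral_nonneg fun x => by positivity) hε.le (inv_pos.2 hp)]

end RealIntegral

theorem exists_eLpNorm_const_eq {X : Type*} [MeasurableSpace X] {μ : Measure X} [IsFiniteMeasure μ]
    [NeZero μ] {p : ℝ≥0∞} (hp0 : p ≠ 0) (hp_top : p ≠ ∞) {M : ℝ≥0∞} (hM : M ≠ ∞) :
    ∃ c : ℝ, eLpNorm (fun _ => c) p μ = M := by
  have hμ0 : μ univ ^ (1 / p.toReal) ≠ 0 := by simp [NeZero.ne μ]
  have hμ_top : μ univ ^ (1 / p.toReal) ≠ ∞ := by finiteness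
  refine ⟨(M / μ univ ^ (1 / p.toReal)).toReal, ?_⟩
  rw [eLpNorm_const' _ hp0 hp_top, Real.enorm_of_nonneg ENNReal.toReal_nonneg,
    ENNReal.ofReal_toReal (ENNReal.div_ne_top hM hμ0), ENNReal.div_mul_cancel hμ0 hμ_top]

theorem eLpNorm_le_eLpNorm_add_eLpNorm_sub {X E : Type*} [MeasurableSpace X] {μ : Measure X}
    [NormedAddCommGroup E] {p : ℝ≥0∞} {f g : X → E} (hf : AEStronglyMeasurable f μ)
    (hg : AEStronglyMeasurable g μ) (hp : 1 ≤ p) :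
    eLpNorm g p μ ≤ eLpNorm f p μ + eLpNorm (fun x => f x - g x) p μ := by
  simpa only [Pi.sub_def, sub_sub_cancel] using eLpNorm_sub_le hf (hf.sub hg) hp

namespace IsSemiflow

variable {F h : ℝ → ℝ} {α β lam p : ℝ} {φ : ℝ → ℝ → ℝ}

theorem eLpNorm_Tapp_le_restrict (hφ : IsSemiflow F α β φ) (hF : IsDecayingField F α β) (hp : 0 < p)
    (hh : ∀ x ∈ Ioo α β, h x = -lam * deriv F x) (hlam : lam * p + 1 ≤ 0) {t : ℝ} (ht : 0 ≤ t)
    (f : ℝ → ℝ) :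
    eLpNorm (Tapp h φ t f) (ENNReal.ofReal p) (volume.restrict (Ioo α β)) ≤
      eLpNorm (straighten F α β lam f) (ENNReal.ofReal p)
        ((weightedHalfLine (weight F α β lam p)).restrict (Ioi t)) := by
  have hnorm := hφ.eLpNorm_Tapp_sub hF hp hh ht f 0
  simp only [straighten, Pi.zero_apply, mul_zero, sub_zero] at hnorm
  rw [hnorm]
  exact weightedHalfLine.eLpNorm_comp_add_right_le
    (hF.monotoneOn_weight (hφ.bijOn_travelTime hF) hlam) ht (straighten F α β lam f) _

theorem eLpNorm_Tapp_le_eLpNorm (hφ : IsSemiflow F α β φ) (hF : IsDecayingField F α β) (hp : 0 < p)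
    (hh : ∀ x ∈ Ioo α β, h x = -lam * deriv F x) (hlam : lam * p + 1 ≤ 0) {t : ℝ} (ht : 0 ≤ t)
    (f : ℝ → ℝ) :
    eLpNorm (Tapp h φ t f) (ENNReal.ofReal p) (volume.restrict (Ioo α β)) ≤
      eLpNorm f (ENNReal.ofReal p) (volume.restrict (Ioo α β)) := by
  rw [← hF.eLpNorm_straighten (lam := lam) (hφ.bijOn_travelTime hF) hp f]
  exact (hφ.eLpNorm_Tapp_le_restrict hF hp hh hlam ht f).trans
    (eLpNorm_mono_measure _ Measure.restrict_le_self)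

theorem stableLp (hφ : IsSemiflow F α β φ) (hF : IsDecayingField F α β) (hp : 0 < p)
    (hh : ∀ x ∈ Ioo α β, h x = -lam * deriv F x) (hlam : lam * p + 1 ≤ 0) :
    StableLp α β p h φ := by
  intro f hf hf_int
  have hf_mem := (integrable_abs_rpow_iff hp hf.aestronglyMeasurable).1 hf_int
  have htail := tendsto_eLpNorm_restrict_Ioi_atTop_zero (ENNReal.ofReal_pos.2 hp).ne'
    ENNReal.ofReal_ne_top (hF.memLp_straighten (lam := lam) (hφ.bijOn_travelTime hF) hp hf hf_mem).2
  refine tendsto_order.2 ⟨fun a ha => Eventually.of_forall fun t =>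
    ha.trans_le (integral_nonneg fun x => by positivity), fun ε hε => ?_⟩
  filter_upwards [eventually_ge_atTop 0,
    htail.eventually_lt_const (ENNReal.ofReal_pos.2 (Real.rpow_pos_of_pos hε p⁻¹))] with t ht hlt
  have hT_lt := (hφ.eLpNorm_Tapp_le_restrict hF hp hh hlam ht f).trans_lt hlt
  exact (integral_abs_rpow_lt_iff hp ⟨hφ.aestronglyMeasurable_Tapp hF hh ht hf,
    hT_lt.trans ENNReal.ofReal_lt_top⟩ hε).2 hT_lt

theorem not_hypercyclicLp (hφ : IsSemiflow F α β φ) (hF : IsDecayingField F α β) (hp : 1 ≤ p)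
    (hh : ∀ x ∈ Ioo α β, h x = -lam * deriv F x) (hlam : lam * p + 1 ≤ 0) :
    ¬HypercyclicLp α β p h φ := by
  rintro ⟨f, hf, hf_int, hdense⟩
  have hp0 : 0 < p := zero_lt_one.trans_le hp
  have hP : 1 ≤ ENNReal.ofReal p := ENNReal.one_le_ofReal.2 hp
  have hf_mem := (integrable_abs_rpow_iff hp0 hf.aestronglyMeasurable).1 hf_int
  have : NeZero (volume.restrict (Ioo α β)) := ⟨by simp [hF.lt]⟩
  obtain ⟨c, hc⟩ := exists_eLpNorm_const_eq (μ := volume.restrict (Ioo α β))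
    (zero_lt_one.trans_le hP).ne' ENNReal.ofReal_ne_top 
    (ENNReal.add_ne_top.2 ⟨hf_mem.2.ne, ENNReal.one_ne_top⟩)
  obtain ⟨t, ht, hlt⟩ := hdense (fun _ => c) measurable_const
    ((integrable_abs_rpow_iff hp0 aestronglyMeasurable_const).2 (memLp_const c)) 1 one_pos
  have hT_meas := hφ.aestronglyMeasurable_Tapp hF hh ht hf
  have hT_le := hφ.eLpNorm_Tapp_le_eLpNorm hF hp0 hh hlam ht f
  have hT_mem : MemLp (Tapp h φ t f) (ENNReal.ofReal p) (volume.restrict (Ioo α β)) :=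
    ⟨hT_meas, hT_le.trans_lt hf_mem.2⟩
  have hsub := (integral_abs_rpow_lt_iff hp0 (hT_mem.sub (memLp_const c)) one_pos).1 hlt
  rw [Real.one_rpow, ENNReal.ofReal_one] at hsub
  refine (eLpNorm_le_eLpNorm_add_eLpNorm_sub (g := fun _ => c) hT_meas
    aestronglyMeasurable_const hP).not_gt ?_
  rw [hc]
  exact ENNReal.add_lt_add_of_le_of_lt hT_mem.2.ne hT_le hsub

theorem exists_frequently_eLpNorm_Tapp_sub_lt (hφ : IsSemiflow F α β φ)
    (hF : IsDecayingField F α β) (hp : 1 ≤ p) (hh : ∀ x ∈ Ioo α β, h x = -lam * deriv F x)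
    (hlam : 0 < lam * p + 1) :
    ∃ f, Measurable f ∧ MemLp f (ENNReal.ofReal p) (volume.restrict (Ioo α β)) ∧
      ∀ g, Measurable g → MemLp g (ENNReal.ofReal p) (volume.restrict (Ioo α β)) → ∀ ε > 0,
        ∃ᶠ t in atTop, eLpNorm (fun x => Tapp h φ t f x - g x) (ENNReal.ofReal p)
          (volume.restrict (Ioo α β)) < ε := by
  have hT := hφ.bijOn_travelTime hF
  have hp0 : 0 < p := zero_lt_one.trans_le hp
  obtain ⟨k, hk, hk_mem, hk_dense⟩ :=
    weightedHalfLine.exists_frequently_eLpNorm_comp_add_sub_lt (E := ℝ)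
      (hF.antitoneOn_weight hT hlam.le) (hF.tendsto_weight hT hlam)
      (ENNReal.one_le_ofReal.2 hp) ENNReal.ofReal_ne_top
  obtain ⟨f, hf, hfk⟩ := hF.exists_straighten_eqOn hT lam hk
  have hpos := weightedHalfLine.ae_pos (weight F α β lam p)
  refine ⟨f, hf, ⟨hf.aestronglyMeasurable, ?_⟩, fun g hg hg_mem ε hε => ?_⟩
  · rw [← hF.eLpNorm_straighten (lam := lam) hT hp0,
      eLpNorm_congr_ae (hpos.mono fun u hu => hfk hu)]
    exact hk_mem.2
  · refine ((hk_dense _ (hF.memLp_straighten hT hp0 hg hg_mem) ε hε).and_eventually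
      (eventually_ge_atTop 0)).mono fun t ⟨hlt, ht⟩ => ?_
    rw [hφ.eLpNorm_Tapp_sub hF hp0 hh ht]
    refine (eLpNorm_congr_ae (hpos.mono fun u hu => ?_)).trans_lt hlt
    simp only [hfk (add_pos_of_pos_of_nonneg hu ht : 0 < u + t)]

theorem hypercyclicLp (hφ : IsSemiflow F α β φ) (hF : IsDecayingField F α β) (hp : 1 ≤ p)
    (hh : ∀ x ∈ Ioo α β, h x = -lam * deriv F x) (hlam : 0 < lam * p + 1) :
    HypercyclicLp α β p h φ := by
  have hp0 : 0 < p := zero_lt_one.trans_le hp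
  obtain ⟨f, hf, hf_mem, hdense⟩ := hφ.exists_frequently_eLpNorm_Tapp_sub_lt hF hp hh hlam
  refine ⟨f, hf, (integrable_abs_rpow_iff hp0 hf.aestronglyMeasurable).2 hf_mem,
    fun g hg hg_int ε hε => ?_⟩
  have hg_mem := (integrable_abs_rpow_iff hp0 hg.aestronglyMeasurable).1 hg_int
  obtain ⟨t, hlt, ht⟩ := ((hdense g hg hg_mem _ (ENNReal.ofReal_pos.2
    (Real.rpow_pos_of_pos hε p⁻¹))).and_eventually (eventually_ge_atTop 0)).exists
  exact ⟨t, ht, (integral_abs_rpow_lt_iff hp0 ⟨(hφ.aestronglyMeasurable_Tapp hF hh ht hf).sub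
    hg.aestronglyMeasurable, hlt.trans ENNReal.ofReal_lt_top⟩ hε).2 hlt⟩

theorem not_stableLp (hφ : IsSemiflow F α β φ) (hF : IsDecayingField F α β) (hp : 1 ≤ p)
    (hh : ∀ x ∈ Ioo α β, h x = -lam * deriv F x) (hlam : 0 < lam * p + 1) :
    ¬StableLp α β p h φ := by
  intro hstable
  have hp0 : 0 < p := zero_lt_one.trans_le hp
  have hP : 1 ≤ ENNReal.ofReal p := ENNReal.one_le_ofReal.2 hp
  obtain ⟨f, hf, hf_mem, hdense⟩ := hφ.exists_frequently_eLpNorm_Tapp_sub_lt hF hp hh hlam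
  have : NeZero (volume.restrict (Ioo α β)) := ⟨by simp [hF.lt]⟩
  obtain ⟨c, hc⟩ := exists_eLpNorm_const_eq (μ := volume.restrict (Ioo α β))
    (zero_lt_one.trans_le hP).ne' ENNReal.ofReal_ne_top (M := 1 + 1) (by finiteness)
  have hlt_one := (hstable f hf ((integrable_abs_rpow_iff hp0 hf.aestronglyMeasurable).2
    hf_mem)).eventually_lt_const one_pos
  obtain ⟨t, hsub, ht, hlt⟩ := ((hdense (fun _ => c) measurable_const (memLp_const c) 1
    one_pos).and_eventually ((eventually_ge_atTop 0).and hlt_one)).exists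
  have hT_meas := hφ.aestronglyMeasurable_Tapp hF hh ht hf
  have hT_mem : MemLp (Tapp h φ t f) (ENNReal.ofReal p) (volume.restrict (Ioo α β)) := by
    have hsub_mem : MemLp (fun x => Tapp h φ t f x - c) (ENNReal.ofReal p)
        (volume.restrict (Ioo α β)) :=
      ⟨hT_meas.sub aestronglyMeasurable_const, hsub.trans ENNReal.one_lt_top⟩
    simpa [Pi.add_def] using hsub_mem.add (memLp_const c)
  rw [integral_abs_rpow_lt_iff hp0 hT_mem one_pos, Real.one_rpow, ENNReal.ofReal_one] at hlt
  refine (eLpNorm_le_eLpNorm_add_eLpNorm_sub (g := fun _ => c) hT_meas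
    aestronglyMeasurable_const hP).not_gt ?_
  rw [hc]
  exact ENNReal.add_lt_add hlt hsub

end IsSemiflow

theorem IsDecayingField.of_contDiffOn {F : ℝ → ℝ} {α β : ℝ} (hab : α < β)
    (hF : ContDiffOn ℝ 1 F (Icc α β)) (hanti : AntitoneOn F (Icc α β)) (hFα : F α = 0)
    (hFneg : ∀ x ∈ Ioo α β, F x < 0) : IsDecayingField F α β where
  lt := hab
  differentiableOn := (hF.differentiableOn one_ne_zero).mono Ioo_subset_Icc_self
  antitoneOn := hanti.mono Ioo_subset_Icc_self
  neg := hFneg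
  tendsto := by
    rw [← hFα, ← nhdsWithin_Ioo_eq_nhdsGT hab]
    exact (hF.continuousOn α (left_mem_Icc.2 hab.le)).mono Ioo_subset_Icc_self

theorem stmt16_general {F h : ℝ → ℝ} {α β p lam : ℝ} {φ : ℝ → ℝ → ℝ} (hp : 1 ≤ p)
    (hF : IsDecayingField F α β) (hφ : IsSemiflow F α β φ)
    (hh : ∀ x ∈ Ioo α β, h x = -lam * deriv F x) :
    (StableLp α β p h φ ↔ ¬HypercyclicLp α β p h φ) ∧ (StableLp α β p h φ ↔ lam ≤ -(1 / p)) := by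
  have hp0 : 0 < p := zero_lt_one.trans_le hp
  have hlam_iff : lam ≤ -(1 / p) ↔ lam * p + 1 ≤ 0 := by
    rw [← neg_div, le_div_iff₀ hp0, le_neg_iff_add_nonpos_right]
  rw [hlam_iff]
  rcases le_or_gt (lam * p + 1) 0 with hlam | hlam
  · have hstable := hφ.stableLp hF hp0 hh hlam
    exact ⟨iff_of_true hstable (hφ.not_hypercyclicLp hF hp hh hlam), iff_of_true hstable hlam⟩
  · have hnot_stable := hφ.not_stableLp hF hp hh hlam
    exact ⟨iff_of_false hnot_stable (not_not.2 (hφ.hypercyclicLp hF hp hh hlam)),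
      iff_of_false hnot_stable hlam.not_ge⟩

/-- Theorem 8: for F ∈ C¹([α,β]) decreasing, F(α) = 0, F < 0 on (α,β], with every
point eventually leaving φ(t̄,Ω), and h = −λF', the semigroup T_{F,h} on L^p(α,β)
is stable iff it is not hypercyclic iff λ ≤ −1/p. -/
theorem stmt16 (α β p lam : ℝ) (hab : α < β) (hp : 1 ≤ p)
    (F : ℝ → ℝ) (hF : ContDiffOn ℝ 1 F (Icc α β))
    (hanti : AntitoneOn F (Icc α β)) (hFα : F α = 0)
    (hFneg : ∀ x ∈ Ioc α β, F x < 0)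
    (φ : ℝ → ℝ → ℝ)
    (hφ0 : ∀ x ∈ Ioo α β, φ 0 x = x)
    (hmem : ∀ t : ℝ, 0 ≤ t → ∀ x ∈ Ioo α β, φ t x ∈ Ioo α β)
    (hode : ∀ x ∈ Ioo α β, ∀ t : ℝ, 0 ≤ t →
      HasDerivWithinAt (fun s => φ s x) (F (φ t x)) (Ici 0) t)
    (hleave : ∀ x ∈ Ioo α β, ∃ tb : ℝ, 0 < tb ∧ x ∉ φ tb '' Ioo α β)
    (h : ℝ → ℝ) (hdef : ∀ x ∈ Icc α β, h x = -lam * deriv F x)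
    (hadm : ∃ M ω : ℝ, 1 ≤ M ∧ ∀ t : ℝ, 0 ≤ t →
      ∀ᵐ x ∂(volume.restrict (Ioo α β)),
        |Real.exp (∫ s in (0:ℝ)..t, h (φ s x))| ^ p ≤
          M * Real.exp (ω * t) * |deriv (φ t) x|) :
    (StableLp α β p h φ ↔ ¬ HypercyclicLp α β p h φ) ∧
    (StableLp α β p h φ ↔ lam ≤ -(1 / p)) :=
  stmt16_general hp
    (IsDecayingField.of_contDiffOn hab hF hanti hFα fun x hx => hFneg x (Ioo_subset_Ioc_self hx))
    ⟨hφ0, hmem, hode⟩ fun x hx => hdef x (Ioo_subset_Icc_self hx)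
end
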